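/- arXiv:1809.07728 — 3 statements merged into one kernel-verified Lean document; each statement's English description precedes it below -/
import Mathlib

section
/- Let F be a Ferrers diagram of semiperimeter n+1, T ∈ EWtab(F), and S = S(T) its supplementary tableau. A cell entry T_{jk} is a cornersupport in T if and only if there exist j' ∈ rows(F) and k' ∈ cols(F) with j' ≠ j and k' ≠ k such that: when T_{jk} = 0, the cells (j',k') and (j,k') belong to F with T_{j'k'} = 1 and T_{jk'} = 0, and S_{j'k} = 0; when T_{jk} = 1, the cells (j',k') and (j',k) belong to F with T_{j'k'} = 0 and T_{j'k} = 1, and S_{jk'} = 1. -/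
open Classical

/-- A Ferrers diagram of semiperimeter `n + 1`, encoded by the set of its row labels
(labels `0, …, n` run along the south-east border; `0` labels the top row and the
last label `n` is a column label). -/
structure Ferrers (n : ℕ) where
  rows : Finset (Fin (n + 1))
  zero_mem : 0 ∈ rows
  last_not_mem : Fin.last n ∉ rows

namespace Ferrers

/-- `(i, j)` is a cell of the diagram: `i` is a row label, `j` a column label, `i < j`. -/
def Cell {n : ℕ} (F : Ferrers n) (i j : Fin (n + 1)) : Prop :=
  i ∈ F.rows ∧ j ∉ F.rows ∧ i < j

/-- Adjacency in the Ferrers graph `G(F)`. -/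
def Adj {n : ℕ} (F : Ferrers n) (u v : Fin (n + 1)) : Prop :=
  F.Cell u v ∨ F.Cell v u

/-- Degree of a vertex in `G(F)`. -/
noncomputable def deg {n : ℕ} (F : Ferrers n) (v : Fin (n + 1)) : ℕ :=
  {u | F.Adj v u}.ncard

/-- Toppling a single vertex.  The height at the sink `0` is kept equal to `c 0`
(grains sent to the sink vanish); toppling the sink sends one grain to each of
its neighbours. -/
noncomputable def topple {n : ℕ} (F : Ferrers n) (c : Fin (n + 1) → ℕ)
    (v : Fin (n + 1)) : Fin (n + 1) → ℕ :=
  fun u =>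
    if u = 0 then c 0
    else if u = v then c v - F.deg v
    else if F.Adj v u then c u + 1
    else c u

/-- Toppling the vertices of a list in order. -/
noncomputable def toppleList {n : ℕ} (F : Ferrers n) (c : Fin (n + 1) → ℕ)
    (l : List (Fin (n + 1))) : Fin (n + 1) → ℕ :=
  l.foldl F.topple c

/-- Simultaneous toppling of a set of vertices. -/
noncomputable def toppleSet {n : ℕ} (F : Ferrers n) (c : Fin (n + 1) → ℕ)
    (S : Set (Fin (n + 1))) : Fin (n + 1) → ℕ :=
  fun u =>
    if u = 0 then c 0
    else c u + {w ∈ S | F.Adj w u}.ncard - if u ∈ S then F.deg u else 0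

/-- A configuration is stable if every non-sink vertex has fewer grains than its degree. -/
def Stable {n : ℕ} (F : Ferrers n) (c : Fin (n + 1) → ℕ) : Prop :=
  ∀ v, v ≠ 0 → c v < F.deg v

/-- A Dhar (burning) ordering for `c`: an ordering `v₀ = 0, v₁, …, vₙ` of all the
vertices such that each `vᵢ` (`i ≥ 1`) is unstable after toppling `v₀, …, v_{i-1}`. -/
def DharSeq {n : ℕ} (F : Ferrers n) (c : Fin (n + 1) → ℕ) (l : List (Fin (n + 1))) : Prop :=
  l.length = n + 1 ∧ l.Nodup ∧ l.head? = some 0 ∧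
    ∀ i, ∀ h : i < l.length, 1 ≤ i →
      F.deg (l.get ⟨i, h⟩) ≤ F.toppleList c (l.take i) (l.get ⟨i, h⟩)

/-- Recurrent configurations (via Dhar's criterion).  The height at the sink is
normalised to `0`. -/
def Recurrent {n : ℕ} (F : Ferrers n) (c : Fin (n + 1) → ℕ) : Prop :=
  c 0 = 0 ∧ F.Stable c ∧ ∃ l, F.DharSeq c l

/-- Minimal recurrent configurations: recurrent with minimal total number of grains. -/
def RecMin {n : ℕ} (F : Ferrers n) (c : Fin (n + 1) → ℕ) : Prop :=
  F.Recurrent c ∧ ∀ c', F.Recurrent c' → (∑ v, c v) ≤ ∑ v, c' v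

/-- Canonical toppling: block `0` is `{0}` (the sink); from then on, blocks with odd
index are the sets of currently unstable column vertices and blocks with even index
the sets of currently unstable row vertices.  The first component is the configuration
just before toppling the block recorded in the second component. -/
noncomputable def canonAux {n : ℕ} (F : Ferrers n) (c : Fin (n + 1) → ℕ) :
    ℕ → ((Fin (n + 1) → ℕ) × Set (Fin (n + 1)))
  | 0 => (c, {0})
  | k + 1 =>
    let c' := F.toppleSet (canonAux F c k).1 (canonAux F c k).2
    (c', {v | v ≠ 0 ∧ (if k % 2 = 0 then v ∉ F.rows else v ∈ F.rows) ∧ F.deg v ≤ c' v})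

/-- The `k`-th block of the canonical toppling of `c`:
`canonTop F c 0 = U⁰ = {0}`, `canonTop F c (2i-1) = Vⁱ`, `canonTop F c (2i) = Uⁱ`. -/
noncomputable def canonTop {n : ℕ} (F : Ferrers n) (c : Fin (n + 1) → ℕ) (k : ℕ) :
    Set (Fin (n + 1)) :=
  (F.canonAux c k).2

/-- The configuration just before toppling the `k`-th block of the canonical toppling. -/
noncomputable def canonConfig {n : ℕ} (F : Ferrers n) (c : Fin (n + 1) → ℕ) (k : ℕ) :
    Fin (n + 1) → ℕ :=
  (F.canonAux c k).1

/-- The index of the block of the canonical toppling of `c` containing `v`. -/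
noncomputable def bIdx {n : ℕ} (F : Ferrers n) (c : Fin (n + 1) → ℕ) (v : Fin (n + 1)) : ℕ :=
  sInf {k | v ∈ F.canonTop c k}

/-- `T` is a EW-tableau on `F` (entries of non-cells are normalised to `false`):
the top row contains only `1`s, every other row contains a `0`, and there is no
rectangle with two diagonally opposite `0`s and two `1`s in the other corners. -/
def IsEW {n : ℕ} (F : Ferrers n) (T : Fin (n + 1) → Fin (n + 1) → Bool) : Prop :=
  (∀ i j, ¬F.Cell i j → T i j = false) ∧
  (∀ j, F.Cell 0 j → T 0 j = true) ∧
  (∀ i, i ∈ F.rows → i ≠ 0 → ∃ j, F.Cell i j ∧ T i j = false) ∧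
  (∀ i i' j j', F.Cell i j → F.Cell i j' → F.Cell i' j → F.Cell i' j' →
    T i j = T i' j' → T i j' = T i' j → T i j = T i j')

/-- The configuration associated to a tableau: row vertices count the `1`s in their
row, column vertices count the `0`s in their column (the sink is normalised to `0`). -/
noncomputable def phiTC {n : ℕ} (F : Ferrers n) (T : Fin (n + 1) → Fin (n + 1) → Bool) :
    Fin (n + 1) → ℕ :=
  fun v =>
    if v = 0 then 0
    else if v ∈ F.rows then {j | F.Cell v j ∧ T v j = true}.ncard
    else {i | F.Cell i v ∧ T i v = false}.ncard

/-- The tableau associated to a (minimal recurrent) configuration: a cell `(i, j)`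
gets a `1` exactly when `i` lies in an earlier block than `j` in the canonical
toppling of `c`. -/
noncomputable def phiCT {n : ℕ} (F : Ferrers n) (c : Fin (n + 1) → ℕ) :
    Fin (n + 1) → Fin (n + 1) → Bool :=
  fun i j => if F.Cell i j ∧ F.bIdx c i < F.bIdx c j then true else false

/-- The supplementary tableau of `T`: `S i j = 1` exactly when the row vertex `i`
lies in an earlier block than the column vertex `j` in `CanonTop (φ_TC T)`. -/
noncomputable def suppS {n : ℕ} (F : Ferrers n) (T : Fin (n + 1) → Fin (n + 1) → Bool)
    (i j : Fin (n + 1)) : Bool :=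
  if F.bIdx (F.phiTC T) i < F.bIdx (F.phiTC T) j then true else false

/-- The entry of `T` in cell `(j, k)` is a cornersupport entry. -/
def Cornersupport {n : ℕ} (F : Ferrers n) (T : Fin (n + 1) → Fin (n + 1) → Bool)
    (j k : Fin (n + 1)) : Prop :=
  ∃ j' k', j' ∈ F.rows ∧ k' ∉ F.rows ∧ j' ≠ j ∧ k' ≠ k ∧
    F.suppS T j' k' = !(T j k) ∧ F.suppS T j' k = T j k ∧ F.suppS T j k' = T j k

/-- `ν_v(T)`: the number of non-cornersupport `0`s in row `v` (if `v` is a row label),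
resp. non-cornersupport `1`s in column `v` (if `v` is a column label). -/
noncomputable def nu {n : ℕ} (F : Ferrers n) (T : Fin (n + 1) → Fin (n + 1) → Bool)
    (v : Fin (n + 1)) : ℕ :=
  if v ∈ F.rows then {k | F.Cell v k ∧ T v k = false ∧ ¬F.Cornersupport T v k}.ncard
  else {i | F.Cell i v ∧ T i v = true ∧ ¬F.Cornersupport T i v}.ncard

/-- `μ_v(c)`: if `v ∈ Uⁱ`, the number of `k ∈ Vⁱ` with `k > v`; if `v ∈ Vⁱ`,
the number of `k ∈ U^{i-1}` with `k < v`.  In both cases the relevant block is the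
one immediately preceding the block of `v`. -/
noncomputable def mu {n : ℕ} (F : Ferrers n) (c : Fin (n + 1) → ℕ) (v : Fin (n + 1)) : ℕ :=
  if v ∈ F.rows then {k | v < k ∧ k ∈ F.canonTop c (F.bIdx c v - 1)}.ncard
  else {k | k < v ∧ k ∈ F.canonTop c (F.bIdx c v - 1)}.ncard

/-- The minimal recurrent configuration with the same canonical toppling as `c`:
if `j ∈ Uⁱ` then `minrec c j = |{ℓ ∈ Vᵏ : j < ℓ, k > i}|`, and if `j ∈ Vⁱ` then
`minrec c j = |{ℓ ∈ Uᵏ : ℓ < j, k ≥ i}|` (blocks `Vᵏ` sit at odd index `2k - 1`,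
blocks `Uᵏ` at even index `2k`). -/
noncomputable def minrecFun {n : ℕ} (F : Ferrers n) (c : Fin (n + 1) → ℕ) :
    Fin (n + 1) → ℕ :=
  fun j =>
    if j = 0 then 0
    else if j ∈ F.rows then
      {l | j < l ∧ ∃ k, F.bIdx c j < 2 * k + 1 ∧ l ∈ F.canonTop c (2 * k + 1)}.ncard
    else
      {l | l < j ∧ ∃ k, F.bIdx c j < 2 * k ∧ l ∈ F.canonTop c (2 * k)}.ncard

/-- The number of edges of `G(F)` (equivalently, the number of cells of `F`). -/
noncomputable def edgeCount {n : ℕ} (F : Ferrers n) : ℕ :=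
  {p : Fin (n + 1) × Fin (n + 1) | F.Cell p.1 p.2}.ncard

end Ferrers

/-!
Orient each edge of `G(F)` from its row to its column where `T` has a `1`, and from its column to
its row where `T` has a `0`. The rectangle condition forbids directed 4-cycles, and a Ferrers
graph has no two disjoint edges that are not joined by a third; so every directed path of length 4
can be shortened to one of length 2 with the same ends, and the orientation is acyclic. The
remaining conditions on `T` make `0` its only source.

In `φ_TC(T)` a vertex holds as many grains as it has outgoing arcs, hence it becomes unstable at the
moment its last predecessor topples: the `k`-th canonical block is the set of vertices whose longest
incoming path has length `k`. Blocks alternate between rows and columns, so an entry is a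
cornersupport only if the ends of its arc are at least three blocks apart, and then walking two
arcs back from the end of that arc finds the required cells.
-/

lemma wellFounded_of_wellFounded_comp_self {α : Type*} {r : α → α → Prop}
    (h : WellFounded (Relation.Comp r r)) : WellFounded r := by
  refine ⟨fun a => h.induction a fun a ih => ?_⟩
  exact ⟨a, fun b hba => ⟨b, fun c hcb => ih c ⟨b, hcb, hba⟩⟩⟩

lemma exists_height_of_wellFounded {α : Type*} {r : α → α → Prop} (hr : WellFounded r)
    (hfin : ∀ v, {u | r u v}.Finite) :
    ∃ h : α → ℕ, (∀ u v, r u v → h u < h v) ∧ ∀ v, h v ≠ 0 → ∃ u, r u v ∧ h u + 1 = h v := by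
  have (v : α) : Finite {u // r u v} := hfin v
  let h : α → ℕ := hr.fix fun v ih => ⨆ u : {u // r u v}, (ih u u.2 + 1)
  have h_eq (v : α) : h v = ⨆ u : {u // r u v}, (h u + 1) := hr.fix_eq _ v
  refine ⟨h, fun u v huv => ?_, fun v hv => ?_⟩
  · rw [h_eq v]
    exact le_ciSup (f := fun u : {u // r u v} => h u + 1) (Set.finite_range _).bddAbove ⟨u, huv⟩
  · have : Nonempty {u // r u v} := by
      by_contra hempty
      rw [not_nonempty_iff] at hempty
      exact hv (by rw [h_eq v, ciSup_of_empty, bot_eq_zero])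
    obtain ⟨u, hu⟩ := exists_eq_ciSup_of_finite (f := fun u : {u // r u v} => h u + 1)
    exact ⟨u, u.2, hu.trans (h_eq v).symm⟩

namespace Ferrers

variable {n : ℕ} {F : Ferrers n} {T : Fin (n + 1) → Fin (n + 1) → Bool}
  {a b d e i j k u v : Fin (n + 1)}

lemma adj_comm : F.Adj u v ↔ F.Adj v u := Or.comm

lemma Cell.cell_or_cell (h : F.Cell i j) (h' : F.Cell u v) : F.Cell i v ∨ F.Cell u j := by
  rcases lt_or_ge i v with hiv | hvi
  · exact .inl ⟨h.1, h'.2.1, hiv⟩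
  · exact .inr ⟨h'.1, h.2.1, (h'.2.2.trans_le hvi).trans h.2.2⟩

lemma Adj.adj_or_adj (h : F.Adj u v) (h' : F.Adj a b) (hua : u ∈ F.rows ↔ a ∈ F.rows) :
    F.Adj u b ∨ F.Adj a v := by
  rcases h with h | h <;> rcases h' with h' | h'
  · exact (h.cell_or_cell h').imp .inl .inl
  · exact absurd (hua.1 h.1) h'.2.1
  · exact absurd (hua.2 h'.1) h.2.1
  · exact (h.cell_or_cell h').symm.imp .inr .inr

/-- The orientation of `G(F)` encoded by a tableau: the edge of a cell points from its row to its
column if the entry is `1`, and from its column to its row if it is `0`. -/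
def Arc (F : Ferrers n) (T : Fin (n + 1) → Fin (n + 1) → Bool) (u v : Fin (n + 1)) : Prop :=
  (F.Cell u v ∧ T u v = true) ∨ (F.Cell v u ∧ T v u = false)

lemma arc_iff_of_mem_rows (hu : u ∈ F.rows) : F.Arc T u v ↔ F.Cell u v ∧ T u v = true := by
  simp [Arc, Cell, hu]

lemma arc_iff_of_notMem_rows (hu : u ∉ F.rows) : F.Arc T u v ↔ F.Cell v u ∧ T v u = false := by
  simp [Arc, Cell, hu]

lemma Arc.mem_rows_iff (h : F.Arc T u v) : v ∈ F.rows ↔ u ∉ F.rows := by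
  unfold Arc Cell at h
  tauto

lemma Arc.asymm (h : F.Arc T u v) : ¬F.Arc T v u := by
  unfold Arc Cell at *
  grind

lemma adj_iff_arc_or_arc : F.Adj u v ↔ F.Arc T u v ∨ F.Arc T v u := by
  unfold Adj Arc
  grind

lemma Arc.adj (h : F.Arc T u v) : F.Adj u v := adj_iff_arc_or_arc.2 (.inl h)

namespace IsEW

lemma not_arc_zero (hT : F.IsEW T) : ¬F.Arc T u 0 := by
  rintro (⟨⟨-, h, -⟩, -⟩ | ⟨h, h'⟩)
  · exact h F.zero_mem
  · simp [hT.2.1 u h] at h'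

lemma exists_arc (hT : F.IsEW T) (hv : v ≠ 0) : ∃ u, F.Arc T u v := by
  by_cases h : v ∈ F.rows
  · obtain ⟨j, hj⟩ := hT.2.2.1 v h hv
    exact ⟨j, .inr hj⟩
  · have hcell : F.Cell 0 v := ⟨F.zero_mem, h, Fin.pos_of_ne_zero hv⟩
    exact ⟨0, .inl ⟨hcell, hT.2.1 v hcell⟩⟩

lemma not_arc_of_arc_of_arc_of_arc (hT : F.IsEW T) (hab : F.Arc T a b) (hbd : F.Arc T b d)
    (hde : F.Arc T d e) : ¬F.Arc T e a := by
  have not_cycle_of_mem_rows {a b d e : Fin (n + 1)} (ha : a ∈ F.rows) (hab : F.Arc T a b)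
      (hbd : F.Arc T b d) (hde : F.Arc T d e) (hea : F.Arc T e a) : False := by
    have hb : b ∉ F.rows := fun hb => hab.mem_rows_iff.1 hb ha
    have he : e ∉ F.rows := hea.mem_rows_iff.1 ha
    rw [arc_iff_of_mem_rows ha] at hab
    rw [arc_iff_of_mem_rows (hbd.mem_rows_iff.2 hb)] at hde
    rw [arc_iff_of_notMem_rows hb] at hbd
    rw [arc_iff_of_notMem_rows he] at hea
    have := hT.2.2.2 a d b e hab.1 hea.1 hbd.1 hde.1 (hab.2.trans hde.2.symm)
      (hea.2.trans hbd.2.symm)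
    simp [hab.2, hea.2] at this
  intro hea
  by_cases ha : a ∈ F.rows
  · exact not_cycle_of_mem_rows ha hab hbd hde hea
  · exact not_cycle_of_mem_rows (hab.mem_rows_iff.2 ha) hbd hde hea hab

lemma exists_arc_arc_of_path (hT : F.IsEW T) (hab : F.Arc T a b) (hbd : F.Arc T b d)
    (hde : F.Arc T d e) (heu : F.Arc T e u) : ∃ v, F.Arc T a v ∧ F.Arc T v u := by
  have hside : a ∈ F.rows ↔ u ∈ F.rows := by
    rw [heu.mem_rows_iff, hde.mem_rows_iff, hbd.mem_rows_iff, hab.mem_rows_iff]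
    tauto
  rcases hab.adj.adj_or_adj (adj_comm.1 heu.adj) hside with h | h
  · exact ⟨e, (adj_iff_arc_or_arc.1 h).resolve_right
      (hT.not_arc_of_arc_of_arc_of_arc hab hbd hde), heu⟩
  · exact ⟨b, hab, (adj_iff_arc_or_arc.1 h).resolve_left
      (hT.not_arc_of_arc_of_arc_of_arc hbd hde heu)⟩

lemma wellFounded_arc (hT : F.IsEW T) : WellFounded (F.Arc T) := by
  have : IsTrans _ (Relation.Comp (F.Arc T) (F.Arc T)) :=
    ⟨fun _ _ _ ⟨_, hab, hbd⟩ ⟨_, hde, heu⟩ => hT.exists_arc_arc_of_path hab hbd hde heu⟩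
  have : Std.Irrefl (Relation.Comp (F.Arc T) (F.Arc T)) := ⟨fun _ ⟨_, h, h'⟩ => h.asymm h'⟩
  exact wellFounded_of_wellFounded_comp_self (Finite.wellFounded_of_trans_of_irrefl _)

end IsEW

/-- `ℓ v` is the length of the longest directed path ending at `v`, for an orientation whose only
source is the sink `0` of the sandpile; stated by the recursion that determines `ℓ`. -/
structure IsLevel (F : Ferrers n) (T : Fin (n + 1) → Fin (n + 1) → Bool)
    (ℓ : Fin (n + 1) → ℕ) : Prop where
  zero : ℓ 0 = 0
  lt_of_arc : ∀ {u v}, F.Arc T u v → ℓ u < ℓ v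
  exists_arc : ∀ {v}, v ≠ 0 → ∃ u, F.Arc T u v ∧ ℓ u + 1 = ℓ v

lemma IsEW.exists_isLevel (hT : F.IsEW T) : ∃ ℓ, F.IsLevel T ℓ := by
  obtain ⟨ℓ, hlt, hpred⟩ :=
    exists_height_of_wellFounded hT.wellFounded_arc fun _ => Set.toFinite _
  refine ⟨ℓ, ⟨?_, hlt _ _, fun {v} hv => hpred v ?_⟩⟩
  · by_contra h
    obtain ⟨u, hu, -⟩ := hpred 0 h
    exact hT.not_arc_zero hu
  · obtain ⟨u, hu⟩ := hT.exists_arc hv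
    exact Nat.ne_zero_of_lt (hlt u v hu)

lemma phiTC_eq_ncard_arc (hv : v ≠ 0) : F.phiTC T v = {u | F.Arc T v u}.ncard := by
  by_cases h : v ∈ F.rows
  · simp only [phiTC, hv, h, if_true, if_false, arc_iff_of_mem_rows]
  · simp only [phiTC, hv, h, if_false, not_false_eq_true, arc_iff_of_notMem_rows]

lemma deg_eq_ncard_arc_add :
    F.deg v = {u | F.Arc T v u}.ncard + {u | F.Arc T u v}.ncard := by
  have hdisj : Disjoint {u | F.Arc T v u} {u | F.Arc T u v} :=
    Set.disjoint_left.2 fun _ hvu huv => Arc.asymm hvu huv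
  simp only [deg, adj_iff_arc_or_arc (T := T), Set.ofPred_or, Set.ncard_union_eq hdisj]

lemma mem_canonTop_succ {c : Fin (n + 1) → ℕ} {m : ℕ} :
    v ∈ F.canonTop c (m + 1) ↔
      v ≠ 0 ∧ (v ∈ F.rows ↔ Even (m + 1)) ∧ F.deg v ≤ F.canonConfig c (m + 1) v := by
  simp only [canonTop, canonConfig, canonAux, Set.mem_ofPred_eq]
  rcases Nat.mod_two_eq_zero_or_one m with h | h <;> simp [h, Nat.even_add_one, Nat.even_iff]

lemma deg_le_canonConfig_of_mem_canonTop {c : Fin (n + 1) → ℕ} {m : ℕ} (hv : v ≠ 0)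
    (h : v ∈ F.canonTop c m) : F.deg v ≤ F.canonConfig c m v := by
  cases m with
  | zero => exact absurd h hv
  | succ m => exact (mem_canonTop_succ.1 h).2.2

lemma canonConfig_succ {c : Fin (n + 1) → ℕ} {m : ℕ} (hv : v ≠ 0) :
    F.canonConfig c (m + 1) v =
      F.canonConfig c m v + {u ∈ F.canonTop c m | F.Adj u v}.ncard -
        if v ∈ F.canonTop c m then F.deg v else 0 := by
  simp only [canonConfig, canonTop, canonAux, toppleSet, if_neg hv]
  congr

/-- The subtracted degree is moved to the left-hand side to avoid truncated subtraction. -/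
lemma canonConfig_add_eq {c ℓ : Fin (n + 1) → ℕ} {m : ℕ}
    (hℓ : ∀ p < m, F.canonTop c p = {u | ℓ u = p}) (hv : v ≠ 0) :
    F.canonConfig c m v + (if ℓ v < m then F.deg v else 0) =
      c v + {u | ℓ u < m ∧ F.Adj u v}.ncard := by
  induction m with
  | zero => simp [canonConfig, canonAux]
  | succ m ih =>
    have hm : F.canonTop c m = {u | ℓ u = m} := hℓ m m.lt_succ_self
    have hle : ℓ v = m → F.deg v ≤ F.canonConfig c m v := fun h =>
      deg_le_canonConfig_of_mem_canonTop hv (hm ▸ h)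
    have hsplit : {u | ℓ u < m + 1 ∧ F.Adj u v}.ncard =
        {u | ℓ u < m ∧ F.Adj u v}.ncard + {u | ℓ u = m ∧ F.Adj u v}.ncard := by
      rw [← Set.ncard_union_eq (Set.disjoint_left.2 fun u h h' => h.1.ne h'.1)]
      congr 1
      ext u
      simp only [Nat.lt_succ_iff_lt_or_eq, or_and_right, Set.mem_ofPred_eq, Set.mem_union]
    have ih := ih fun p hp => hℓ p (hp.trans m.lt_succ_self)
    rw [canonConfig_succ hv, hm, hsplit]
    simp only [Set.mem_ofPred_eq]
    split_ifs at * <;> omega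

namespace IsLevel

variable {ℓ : Fin (n + 1) → ℕ}

lemma eq_zero_iff (hℓ : F.IsLevel T ℓ) : ℓ v = 0 ↔ v = 0 := by
  refine ⟨fun h => ?_, fun h => h ▸ hℓ.zero⟩
  by_contra hv
  obtain ⟨u, -, hu⟩ := hℓ.exists_arc hv
  omega

lemma mem_rows_iff_even (hℓ : F.IsLevel T ℓ) : v ∈ F.rows ↔ Even (ℓ v) := by
  induction hm : ℓ v generalizing v with
  | zero => simp [hℓ.eq_zero_iff.1 hm, F.zero_mem]
  | succ m ih =>
    obtain ⟨u, huv, hu⟩ := hℓ.exists_arc (hℓ.eq_zero_iff.not.1 (by omega : ℓ v ≠ 0))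
    rw [huv.mem_rows_iff, ih (by omega), Nat.even_add_one]

lemma ne_of_mem_rows_of_notMem_rows (hℓ : F.IsLevel T ℓ) (hi : i ∈ F.rows) (hj : j ∉ F.rows) :
    ℓ i ≠ ℓ j := by
  rw [hℓ.mem_rows_iff_even] at hi hj
  exact fun h => hj (h ▸ hi)

lemma forall_arc_lt_iff (hℓ : F.IsLevel T ℓ) (hv : v ≠ 0) {m : ℕ} :
    (∀ u, F.Arc T u v → ℓ u < m) ↔ ℓ v ≤ m := by
  refine ⟨fun h => ?_, fun h u huv => (hℓ.lt_of_arc huv).trans_le h⟩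
  obtain ⟨u, huv, hu⟩ := hℓ.exists_arc hv
  exact hu ▸ h u huv

lemma ofPred_lt_and_adj_eq (hℓ : F.IsLevel T ℓ) {m : ℕ} (hm : m ≤ ℓ v) :
    {u | ℓ u < m ∧ F.Adj u v} = {u | F.Arc T u v ∧ ℓ u < m} := by
  ext u
  refine ⟨fun ⟨hu, h⟩ => ⟨(adj_iff_arc_or_arc.1 h).resolve_right fun hvu => ?_, hu⟩,
    fun ⟨h, hu⟩ => ⟨hu, h.adj⟩⟩
  exact (hu.trans_le hm).asymm (hℓ.lt_of_arc hvu)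

/-- `x` is the number of grains at `v` once exactly the vertices of level below `m` have toppled. -/
lemma deg_le_iff (hℓ : F.IsLevel T ℓ) (hv : v ≠ 0) {m x : ℕ}
    (hx : x + (if ℓ v < m then F.deg v else 0) =
      F.phiTC T v + {u | ℓ u < m ∧ F.Adj u v}.ncard) :
    F.deg v ≤ x ↔ ℓ v = m := by
  have hdeg := deg_eq_ncard_arc_add (F := F) (T := T) (v := v)
  rw [phiTC_eq_ncard_arc hv] at hx
  by_cases hm : ℓ v < m
  · have hadj : {u | ℓ u < m ∧ F.Adj u v}.ncard ≤ F.deg v :=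
      Set.ncard_le_ncard fun u hu => adj_comm.1 hu.2
    have hin : 0 < {u | F.Arc T u v}.ncard :=
      (Set.ncard_pos).2 ((hℓ.exists_arc hv).imp fun _ h => h.1)
    rw [if_pos hm] at hx
    omega
  · have hsub : {u | F.Arc T u v ∧ ℓ u < m} ⊆ {u | F.Arc T u v} := fun u hu => hu.1
    rw [if_neg hm, add_zero, hℓ.ofPred_lt_and_adj_eq (not_lt.1 hm)] at hx
    calc F.deg v ≤ x
      _ ↔ {u | F.Arc T u v}.ncard ≤ {u | F.Arc T u v ∧ ℓ u < m}.ncard := by omega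
      _ ↔ {u | F.Arc T u v ∧ ℓ u < m} = {u | F.Arc T u v} :=
        ⟨Set.eq_of_subset_of_ncard_le hsub, fun h => h ▸ le_rfl⟩
      _ ↔ ∀ u, F.Arc T u v → ℓ u < m := Set.sep_eq_self_iff_mem_true
      _ ↔ ℓ v ≤ m := hℓ.forall_arc_lt_iff hv
      _ ↔ ℓ v = m := ⟨fun h => h.antisymm (not_lt.1 hm), le_of_eq⟩

lemma canonTop_phiTC (hℓ : F.IsLevel T ℓ) (m : ℕ) :
    F.canonTop (F.phiTC T) m = {v | ℓ v = m} := by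
  induction m using Nat.strong_induction_on with
  | _ m ih =>
    ext v
    cases m with
    | zero => exact hℓ.eq_zero_iff.symm
    | succ m =>
      rw [mem_canonTop_succ, Set.mem_ofPred_eq]
      constructor
      · rintro ⟨hv, -, hdeg⟩
        exact (hℓ.deg_le_iff hv (canonConfig_add_eq ih hv)).1 hdeg
      · intro hm
        have hv : v ≠ 0 := hℓ.eq_zero_iff.not.1 (by omega : ℓ v ≠ 0)
        exact ⟨hv, hm ▸ hℓ.mem_rows_iff_even,
          (hℓ.deg_le_iff hv (canonConfig_add_eq ih hv)).2 hm⟩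

lemma bIdx_phiTC (hℓ : F.IsLevel T ℓ) : F.bIdx (F.phiTC T) = ℓ := by
  funext v
  simp only [bIdx, hℓ.canonTop_phiTC, Set.mem_ofPred_eq, Set.ofPred_eq_eq_singleton',
    csInf_singleton]

lemma apply_eq_true_iff (hℓ : F.IsLevel T ℓ) (h : F.Cell i j) : T i j = true ↔ ℓ i < ℓ j := by
  refine ⟨fun h1 => hℓ.lt_of_arc (.inl ⟨h, h1⟩), fun hlt => ?_⟩
  by_contra h0
  exact hlt.asymm (hℓ.lt_of_arc (.inr ⟨h, Bool.not_eq_true _ ▸ h0⟩))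

lemma exists_arc_arc (hℓ : F.IsLevel T ℓ) (hv : 2 ≤ ℓ v) :
    ∃ a b, F.Arc T a b ∧ F.Arc T b v ∧ ℓ a + 2 = ℓ v := by
  obtain ⟨b, hbv, hb⟩ := hℓ.exists_arc (hℓ.eq_zero_iff.not.1 (by omega : ℓ v ≠ 0))
  obtain ⟨a, hab, ha⟩ := hℓ.exists_arc (hℓ.eq_zero_iff.not.1 (by omega : ℓ b ≠ 0))
  exact ⟨a, b, hab, hbv, by omega⟩

end IsLevel

lemma suppS_eq_true_iff :
    F.suppS T i j = true ↔ F.bIdx (F.phiTC T) i < F.bIdx (F.phiTC T) j := by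
  simp [suppS]

lemma suppS_eq_false_iff :
    F.suppS T i j = false ↔ F.bIdx (F.phiTC T) j ≤ F.bIdx (F.phiTC T) i := by
  simp [suppS]

namespace IsEW

lemma isLevel_bIdx (hT : F.IsEW T) : F.IsLevel T (F.bIdx (F.phiTC T)) := by
  obtain ⟨ℓ, hℓ⟩ := hT.exists_isLevel
  rwa [hℓ.bIdx_phiTC]

lemma suppS_eq (hT : F.IsEW T) (h : F.Cell i j) : F.suppS T i j = T i j := by
  rw [Bool.eq_iff_iff, suppS_eq_true_iff, hT.isLevel_bIdx.apply_eq_true_iff h]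

lemma bIdx_add_three_le_of_cornersupport_of_false (hT : F.IsEW T) (hj : j ∈ F.rows)
    (hk : k ∉ F.rows) (h0 : T j k = false) (h : F.Cornersupport T j k) :
    F.bIdx (F.phiTC T) k + 3 ≤ F.bIdx (F.phiTC T) j := by
  obtain ⟨j', k', hj', hk', -, -, hj'k', hj'k, hjk'⟩ := h
  rw [h0, Bool.not_false, suppS_eq_true_iff] at hj'k'
  rw [h0, suppS_eq_false_iff] at hj'k hjk'
  have := hT.isLevel_bIdx.ne_of_mem_rows_of_notMem_rows hj' hk
  have := hT.isLevel_bIdx.ne_of_mem_rows_of_notMem_rows hj hk'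
  omega

lemma bIdx_add_three_le_of_cornersupport_of_true (hT : F.IsEW T) (h1 : T j k = true)
    (h : F.Cornersupport T j k) :
    F.bIdx (F.phiTC T) j + 3 ≤ F.bIdx (F.phiTC T) k := by
  obtain ⟨j', k', hj', hk', -, -, hj'k', hj'k, hjk'⟩ := h
  rw [h1, Bool.not_true, suppS_eq_false_iff] at hj'k'
  rw [h1, suppS_eq_true_iff] at hj'k hjk'
  have := hT.isLevel_bIdx.ne_of_mem_rows_of_notMem_rows hj' hk'
  omega

lemma exists_cells_of_bIdx_add_three_le_row (hT : F.IsEW T) (hj : j ∈ F.rows)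
    (h : F.bIdx (F.phiTC T) k + 3 ≤ F.bIdx (F.phiTC T) j) :
    ∃ j' k', j' ≠ j ∧ k' ≠ k ∧ F.Cell j' k' ∧ F.Cell j k' ∧
      T j' k' = true ∧ T j k' = false ∧ F.suppS T j' k = false := by
  obtain ⟨j', k', hj'k', hk'j, hj'⟩ := hT.isLevel_bIdx.exists_arc_arc (v := j) (by omega)
  have hlt := hT.isLevel_bIdx.lt_of_arc hj'k'
  have hk' : k' ∉ F.rows := hk'j.mem_rows_iff.1 hj
  obtain ⟨hcell, h0⟩ := (arc_iff_of_notMem_rows hk').1 hk'j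
  obtain ⟨hcell', h1⟩ :=
    (arc_iff_of_mem_rows (not_imp_comm.1 hj'k'.mem_rows_iff.2 hk')).1 hj'k'
  refine ⟨j', k', ?_, ?_, hcell', hcell, h1, h0, suppS_eq_false_iff.2 (by omega)⟩ <;>
    rintro rfl <;> omega

lemma exists_cells_of_bIdx_add_three_le_column (hT : F.IsEW T) (hk : k ∉ F.rows)
    (h : F.bIdx (F.phiTC T) j + 3 ≤ F.bIdx (F.phiTC T) k) :
    ∃ j' k', j' ≠ j ∧ k' ≠ k ∧ F.Cell j' k' ∧ F.Cell j' k ∧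
      T j' k' = false ∧ T j' k = true ∧ F.suppS T j k' = true := by
  obtain ⟨k', j', hk'j', hj'k, hk'⟩ := hT.isLevel_bIdx.exists_arc_arc (v := k) (by omega)
  have hlt := hT.isLevel_bIdx.lt_of_arc hk'j'
  have hj' : j' ∈ F.rows := not_imp_comm.1 hj'k.mem_rows_iff.2 hk
  obtain ⟨hcell, h1⟩ := (arc_iff_of_mem_rows hj').1 hj'k
  obtain ⟨hcell', h0⟩ := (arc_iff_of_notMem_rows (hk'j'.mem_rows_iff.1 hj')).1 hk'j'
  refine ⟨j', k', ?_, ?_, hcell', hcell, h0, h1, suppS_eq_true_iff.2 (by omega)⟩ <;>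
    rintro rfl <;> omega

end IsEW

end Ferrers

/-- **Corollary.** A cell entry `T_{jk}` is a cornersupport if and
only if there are a row `j' ≠ j` and a column `k' ≠ k` such that: when `T_{jk} = 0`,
the cells `(j', k')` and `(j, k')` belong to `F` with `T_{j'k'} = 1`, `T_{jk'} = 0`
and `S_{j'k} = 0`; and when `T_{jk} = 1`, the cells `(j', k')` and `(j', k)` belong
to `F` with `T_{j'k'} = 0`, `T_{j'k} = 1` and `S_{jk'} = 1`. -/
theorem cornersupport_iff {n : ℕ} (F : Ferrers n)
    (T : Fin (n + 1) → Fin (n + 1) → Bool) (hT : F.IsEW T)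
    (j k : Fin (n + 1)) (hcell : F.Cell j k) :
    F.Cornersupport T j k ↔
      ∃ j' k' : Fin (n + 1), j' ∈ F.rows ∧ k' ∉ F.rows ∧ j' ≠ j ∧ k' ≠ k ∧
        ((T j k = false ∧ F.Cell j' k' ∧ F.Cell j k' ∧
            T j' k' = true ∧ T j k' = false ∧ F.suppS T j' k = false) ∨
         (T j k = true ∧ F.Cell j' k' ∧ F.Cell j' k ∧
            T j' k' = false ∧ T j' k = true ∧ F.suppS T j k' = true)) := by
  constructor
  · intro h
    cases hjk : T j k
    · obtain ⟨j', k', hj, hk, hcells⟩ := hT.exists_cells_of_bIdx_add_three_le_row hcell.1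
        (hT.bIdx_add_three_le_of_cornersupport_of_false hcell.1 hcell.2.1 hjk h)
      exact ⟨j', k', hcells.1.1, hcells.1.2.1, hj, hk, .inl ⟨rfl, hcells⟩⟩
    · obtain ⟨j', k', hj, hk, hcells⟩ := hT.exists_cells_of_bIdx_add_three_le_column hcell.2.1
        (hT.bIdx_add_three_le_of_cornersupport_of_true hjk h)
      exact ⟨j', k', hcells.1.1, hcells.1.2.1, hj, hk, .inr ⟨rfl, hcells⟩⟩
  · rintro ⟨j', k', hj', hk', hj, hk, ⟨h, hj'k', hjk', h1, h2, hS⟩ | ⟨h, hj'k', hj'k, h1, h2, hS⟩⟩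
    · refine ⟨j', k', hj', hk', hj, hk, ?_, hS.trans h.symm, ?_⟩
      · rw [hT.suppS_eq hj'k', h, h1, Bool.not_false]
      · rw [hT.suppS_eq hjk', h, h2]
    · refine ⟨j', k', hj', hk', hj, hk, ?_, ?_, hS.trans h.symm⟩
      · rw [hT.suppS_eq hj'k', h, h1, Bool.not_true]
      · rw [hT.suppS_eq hj'k, h, h2]
end

section
/- Let F be a Ferrers diagram of semiperimeter n+1, T ∈ EWtab(F), and CanonTop(φ_TC(T)) = (U^0, V^1, U^1, …). Then: (a) for every i ∈ rows(F) \ {0} with i ∈ U^ℓ, the number of 0 entries in row i of T equals |{j ∈ cols(F) : j > i and j ∈ V^1 ∪ ⋯ ∪ V^ℓ}|; and (b) for every i ∈ cols(F) with i ∈ V^ℓ, the number of 1 entries in column i of T equals |{j ∈ rows(F) : j < i and j ∈ U^0 ∪ ⋯ ∪ U^{ℓ−1}}|. -/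
open Classical

/-! A filling orients `G(F)`: a `1` points from its row to its column, a `0` the other way. Away
from the sink, `phiTC T` is then the out-degree; the sink is a source and no other vertex is. For
any graph oriented in this way, the out-degree configuration is stable, so no vertex topples
twice. A vertex becomes unstable only once it has received at least in-degree many grains, one
from each neighbour toppled so far. By induction no out-neighbour can topple first, since it waits
for all of its own in-neighbours. Hence the neighbours toppled before a vertex are exactly its
in-neighbours: the zeros of its row, or the ones of its column. -/

/-- A sequence of simultaneous topplings on `G` that starts with the sink `s`: `config k` is the
configuration just before the vertices of `block k` topple, and from then on only unstable non-sink
vertices topple. The height at the sink is unconstrained. Grain counts are balanced additively, so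
that no truncated subtraction occurs. -/
structure TopplingSequence {V : Type*} (G : SimpleGraph V) [G.LocallyFinite] (s : V) where
  config : ℕ → V → ℕ
  block : ℕ → Set V
  block_zero : block 0 = {s}
  sink_notMem : ∀ k, s ∉ block (k + 1)
  degree_le : ∀ k, ∀ v ∈ block (k + 1), G.degree v ≤ config (k + 1) v
  config_succ : ∀ k, ∀ v ≠ s, config (k + 1) v + (block k).indicator (fun w => G.degree w) v =
    config k v + (block k ∩ G.neighborSet v).ncard

/-- `D` is an orientation of `G`: every edge of `G` carries exactly one of its two directions
in `D`, and `D` has no other arcs. -/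
structure IsOrientation {V : Type*} (G : SimpleGraph V) (D : Digraph V) : Prop where
  adj_iff : ∀ {u v}, G.Adj u v ↔ D.Adj u v ∨ D.Adj v u
  asymm : ∀ {u v}, D.Adj u v → ¬D.Adj v u

section Graph

variable {V : Type*} {G : SimpleGraph V} [G.LocallyFinite] {s v : V}

lemma ncard_neighborSet_eq_degree (v : V) : (G.neighborSet v).ncard = G.degree v :=
  Set.ncard_eq_toFinset_card' _

lemma ncard_inter_neighborSet_le_degree (S : Set V) (v : V) :
    (S ∩ G.neighborSet v).ncard ≤ G.degree v :=
  (Set.ncard_le_ncard Set.inter_subset_right (Set.toFinite _)).trans_eq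
    (ncard_neighborSet_eq_degree v)

namespace IsOrientation

variable {D : Digraph V}

lemma finite_inNeighbors (hD : IsOrientation G D) (v : V) : {w | D.Adj w v}.Finite :=
  (Set.toFinite (G.neighborSet v)).subset fun _ hw => hD.adj_iff.2 (Or.inr hw)

lemma ncard_outNeighbors_add_ncard_inNeighbors (hD : IsOrientation G D) (v : V) :
    {w | D.Adj v w}.ncard + {w | D.Adj w v}.ncard = G.degree v := by
  have hunion : G.neighborSet v = {w | D.Adj v w} ∪ {w | D.Adj w v} :=
    Set.ext fun _ => hD.adj_iff
  have hdisj : Disjoint {w | D.Adj v w} {w | D.Adj w v} :=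
    Set.disjoint_left.2 fun _ hout hin => hD.asymm hout hin
  have hout : {w | D.Adj v w}.Finite :=
    (Set.toFinite (G.neighborSet v)).subset fun _ hw => hD.adj_iff.2 (Or.inl hw)
  rw [← ncard_neighborSet_eq_degree, hunion,
    Set.ncard_union_eq hdisj hout (hD.finite_inNeighbors v)]

lemma ncard_outNeighbors_lt_degree (hD : IsOrientation G D) (hv : ∃ w, D.Adj w v) :
    {w | D.Adj v w}.ncard < G.degree v := by
  have hpos : 0 < {w | D.Adj w v}.ncard := (Set.ncard_pos (hD.finite_inNeighbors v)).2 hv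
  have hdeg := hD.ncard_outNeighbors_add_ncard_inNeighbors v
  omega

end IsOrientation

namespace TopplingSequence

variable (P : TopplingSequence G s)

/-- The vertices that have toppled by the time block `k` is about to topple. -/
def toppledBefore (k : ℕ) : Set V :=
  ⋃ m < k, P.block m

variable {P} {k : ℕ}

lemma mem_toppledBefore : v ∈ P.toppledBefore k ↔ ∃ m < k, v ∈ P.block m := by
  simp only [toppledBefore, Set.mem_iUnion, exists_prop]

lemma toppledBefore_succ (k : ℕ) :
    P.toppledBefore (k + 1) = P.toppledBefore k ∪ P.block k :=
  Set.biUnion_lt_succ P.block k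

lemma toppledBefore_mono : Monotone P.toppledBefore := fun _ _ h =>
  Set.biUnion_subset_biUnion_left fun _ hm => lt_of_lt_of_le hm h

lemma degree_le_config (hv : v ≠ s) (h : v ∈ P.block k) : G.degree v ≤ P.config k v := by
  cases k with
  | zero => exact absurd (P.block_zero.le h) hv
  | succ k => exact P.degree_le k v h

lemma sink_notMem_toppledBefore (h : s ∈ P.block k) : s ∉ P.toppledBefore k := by
  cases k with
  | zero => simp [mem_toppledBefore]
  | succ k => exact absurd h (P.sink_notMem k)

lemma config_add_indicator_of_disjoint
    (hdisj : ∀ m < k, Disjoint (P.toppledBefore m) (P.block m)) (hv : v ≠ s) :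
    P.config k v + (P.toppledBefore k).indicator (fun w => G.degree w) v =
      P.config 0 v + (P.toppledBefore k ∩ G.neighborSet v).ncard := by
  induction k with
  | zero => simp [toppledBefore]
  | succ k ih =>
    have hk := hdisj k k.lt_succ_self
    have hnbr : ((P.toppledBefore k ∪ P.block k) ∩ G.neighborSet v).ncard =
        (P.toppledBefore k ∩ G.neighborSet v).ncard + (P.block k ∩ G.neighborSet v).ncard := by
      rw [Set.union_inter_distrib_right]
      exact Set.ncard_union_eq (hk.mono Set.inter_subset_left Set.inter_subset_left)
        (Set.toFinite _) (Set.toFinite _)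
    have hbefore := ih fun m hm => hdisj m (hm.trans k.lt_succ_self)
    have hstep := P.config_succ k v hv
    rw [toppledBefore_succ, Set.indicator_union_of_disjoint hk, hnbr]
    dsimp only
    omega

lemma disjoint_toppledBefore_block (hstable : ∀ v ≠ s, P.config 0 v < G.degree v) (k : ℕ) :
    Disjoint (P.toppledBefore k) (P.block k) := by
  induction k using Nat.strong_induction_on with
  | h k ih =>
    refine Set.disjoint_left.2 fun v hbefore hblock => ?_
    by_cases hv : v = s
    · subst hv
      exact sink_notMem_toppledBefore hblock hbefore
    · -- `v` has lost `deg v` grains and received at most `deg v`, so it is still stable.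
      have hconfig := config_add_indicator_of_disjoint ih hv
      rw [Set.indicator_of_mem hbefore] at hconfig
      have hreceived := ncard_inter_neighborSet_le_degree (G := G) (P.toppledBefore k) v
      have hunstable := degree_le_config hv hblock
      have hinitial := hstable v hv
      omega

lemma degree_le_config_zero_add_ncard (hstable : ∀ v ≠ s, P.config 0 v < G.degree v)
    (hv : v ≠ s) (h : v ∈ P.block k) :
    G.degree v ≤ P.config 0 v + (P.toppledBefore k ∩ G.neighborSet v).ncard := by
  have hnotMem := (disjoint_toppledBefore_block hstable k).notMem_of_mem_right h
  have hconfig := config_add_indicator_of_disjoint (k := k)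
    (fun m _ => disjoint_toppledBefore_block hstable m) hv
  rw [Set.indicator_of_notMem hnotMem, add_zero] at hconfig
  exact hconfig ▸ degree_le_config hv h

theorem toppledBefore_inter_neighborSet_eq {D : Digraph V} (hD : IsOrientation G D)
    (hsource : ∀ w, ¬D.Adj w s) (hin : ∀ v ≠ s, ∃ w, D.Adj w v)
    (hout : ∀ v ≠ s, P.config 0 v = {w | D.Adj v w}.ncard) (h : v ∈ P.block k) :
    P.toppledBefore k ∩ G.neighborSet v = {w | D.Adj w v} := by
  have hstable : ∀ v ≠ s, P.config 0 v < G.degree v := fun v hv =>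
    hout v hv ▸ hD.ncard_outNeighbors_lt_degree (hin v hv)
  induction k using Nat.strong_induction_on generalizing v with
  | h k ih =>
    -- If an out-neighbour `w` of `v` had toppled first, `v` would have toppled before `w`.
    have hsub : P.toppledBefore k ∩ G.neighborSet v ⊆ {w | D.Adj w v} := by
      rintro w ⟨hw, hadj⟩
      obtain ⟨m, hmk, hwm⟩ := mem_toppledBefore.1 hw
      refine (hD.adj_iff.1 hadj).resolve_left fun hvw => ?_
      have hvm : v ∈ P.toppledBefore m := ((ih m hmk hwm).ge hvw).1
      exact (disjoint_toppledBefore_block hstable k).notMem_of_mem_right h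
        (toppledBefore_mono hmk.le hvm)
    by_cases hv : v = s
    · subst hv
      exact hsub.antisymm fun w hw => absurd hw (hsource w)
    · have hunstable := degree_le_config_zero_add_ncard hstable hv h
      have hdeg := hD.ncard_outNeighbors_add_ncard_inNeighbors v
      rw [hout v hv] at hunstable
      exact Set.eq_of_subset_of_ncard_le hsub (by omega) (hD.finite_inNeighbors v)

end TopplingSequence

end Graph

namespace Ferrers

variable {n : ℕ} {F : Ferrers n} {T : Fin (n + 1) → Fin (n + 1) → Bool}
  {c : Fin (n + 1) → ℕ} {i j v w : Fin (n + 1)} {k l : ℕ}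

/-- The Ferrers graph `G(F)`. -/
def graph (F : Ferrers n) : SimpleGraph (Fin (n + 1)) where
  Adj := F.Adj
  symm := ⟨fun _ _ => Or.symm⟩
  loopless := ⟨fun _ h => h.elim (fun h => h.2.2.false) fun h => h.2.2.false⟩

lemma adj_iff_of_mem_rows (hi : i ∈ F.rows) : F.Adj i j ↔ j ∉ F.rows ∧ i < j :=
  (or_iff_left fun h => h.2.1 hi).trans (and_iff_right hi)

lemma adj_iff_of_notMem_rows (hi : i ∉ F.rows) : F.Adj i j ↔ j ∈ F.rows ∧ j < i :=
  (or_iff_right fun h => hi h.1).trans (and_congr_right' (and_iff_right hi))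

lemma deg_eq_degree (F : Ferrers n) (v : Fin (n + 1)) : F.deg v = F.graph.degree v :=
  ncard_neighborSet_eq_degree (G := F.graph) v

lemma mem_rows_iff_even_of_mem_canonTop (h : v ∈ F.canonTop c k) : v ∈ F.rows ↔ Even k := by
  cases k with
  | zero =>
    obtain rfl : v = 0 := h
    simp [F.zero_mem]
  | succ k =>
    have hside := h.2.1
    rw [Nat.even_add_one, Nat.even_iff]
    split_ifs at hside with hk <;> simp [hside, hk]

/-- The canonical toppling of `c`, with `canonConfig` and `canonTop` as its configurations and
blocks. -/
noncomputable def canonToppling (F : Ferrers n) (c : Fin (n + 1) → ℕ) :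
    TopplingSequence F.graph 0 where
  config := F.canonConfig c
  block := F.canonTop c
  block_zero := rfl
  sink_notMem _ h := h.1 rfl
  degree_le _ v h := F.deg_eq_degree v ▸ h.2.2
  config_succ k v hv := by
    have hnbr : {w ∈ F.canonTop c k | F.Adj w v} = F.canonTop c k ∩ F.graph.neighborSet v :=
      Set.ext fun _ => and_congr_right' or_comm
    have hsucc : F.canonConfig c (k + 1) v =
        F.toppleSet (F.canonConfig c k) (F.canonTop c k) v := rfl
    rw [hsucc, toppleSet, if_neg hv, hnbr, Set.indicator_apply, ← deg_eq_degree]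
    refine Nat.sub_add_cancel ?_
    split_ifs with h
    · cases k with
      | zero => exact absurd h hv
      | succ k => exact le_add_right h.2.2
    · exact Nat.zero_le _

lemma mem_toppledBefore_canonToppling_of_mem_rows (hj : j ∈ F.rows) :
    j ∈ (F.canonToppling c).toppledBefore (2 * l + 1) ↔
      ∃ m, m ≤ l ∧ j ∈ F.canonTop c (2 * m) := by
  rw [TopplingSequence.mem_toppledBefore]
  constructor
  · rintro ⟨m, hm, h⟩
    obtain ⟨a, rfl⟩ := even_iff_exists_two_mul.1 ((mem_rows_iff_even_of_mem_canonTop h).1 hj)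
    exact ⟨a, by omega, h⟩
  · rintro ⟨m, hm, h⟩
    exact ⟨2 * m, by omega, h⟩

lemma mem_toppledBefore_canonToppling_of_notMem_rows (hj : j ∉ F.rows) :
    j ∈ (F.canonToppling c).toppledBefore (2 * l) ↔
      ∃ m, m < l ∧ j ∈ F.canonTop c (2 * m + 1) := by
  rw [TopplingSequence.mem_toppledBefore]
  constructor
  · rintro ⟨m, hm, h⟩
    obtain ⟨a, rfl⟩ :=
      Nat.not_even_iff_odd.1 fun he => hj ((mem_rows_iff_even_of_mem_canonTop h).2 he)
    exact ⟨a, by omega, h⟩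
  · rintro ⟨m, hm, h⟩
    exact ⟨2 * m + 1, by omega, h⟩

/-- The orientation of `G(F)` encoded by a filling: a `1` directs the edge of its cell from the row
to the column, a `0` from the column to the row. -/
def orientation (F : Ferrers n) (T : Fin (n + 1) → Fin (n + 1) → Bool) :
    Digraph (Fin (n + 1)) where
  Adj u v := (F.Cell u v ∧ T u v = true) ∨ (F.Cell v u ∧ T v u = false)

lemma orientation_adj_left_of_mem_rows (hi : i ∈ F.rows) :
    (F.orientation T).Adj i j ↔ F.Cell i j ∧ T i j = true :=
  or_iff_left fun h => h.1.2.1 hi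

lemma orientation_adj_left_of_notMem_rows (hi : i ∉ F.rows) :
    (F.orientation T).Adj i j ↔ F.Cell j i ∧ T j i = false :=
  or_iff_right fun h => hi h.1.1

lemma orientation_adj_right_of_mem_rows (hi : i ∈ F.rows) :
    (F.orientation T).Adj j i ↔ F.Cell i j ∧ T i j = false :=
  or_iff_right fun h => h.1.2.1 hi

lemma orientation_adj_right_of_notMem_rows (hi : i ∉ F.rows) :
    (F.orientation T).Adj j i ↔ F.Cell j i ∧ T j i = true :=
  or_iff_left fun h => hi h.1.1

lemma isOrientation_orientation (F : Ferrers n) (T : Fin (n + 1) → Fin (n + 1) → Bool) :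
    IsOrientation F.graph (F.orientation T) where
  adj_iff {u v} := by
    change F.Cell u v ∨ F.Cell v u ↔ _
    cases huv : T u v <;> cases hvu : T v u <;> simp [orientation, huv, hvu, or_comm]
  asymm {u v} := by
    by_cases hu : u ∈ F.rows
    · rw [orientation_adj_left_of_mem_rows hu, orientation_adj_right_of_mem_rows hu]
      simp +contextual
    · rw [orientation_adj_left_of_notMem_rows hu, orientation_adj_right_of_notMem_rows hu]
      simp +contextual

lemma phiTC_eq_ncard_outNeighbors (hv : v ≠ 0) :
    F.phiTC T v = {w | (F.orientation T).Adj v w}.ncard := by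
  by_cases hr : v ∈ F.rows
  · simp only [phiTC, hv, hr, if_true, if_false, orientation_adj_left_of_mem_rows hr]
  · simp only [phiTC, hv, hr, if_false, orientation_adj_left_of_notMem_rows hr]

theorem orientation_adj_iff_of_mem_canonTop (hone : ∀ j, F.Cell 0 j → T 0 j = true)
    (hzero : ∀ i ∈ F.rows, i ≠ 0 → ∃ j, F.Cell i j ∧ T i j = false)
    (hv : v ∈ F.canonTop (F.phiTC T) k) :
    (F.orientation T).Adj w v ↔
      F.Adj v w ∧ w ∈ (F.canonToppling (F.phiTC T)).toppledBefore k := by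
  have hsource : ∀ w, ¬(F.orientation T).Adj w 0 := by
    intro w
    rw [orientation_adj_right_of_mem_rows F.zero_mem]
    rintro ⟨hcell, hfalse⟩
    simp [hone w hcell] at hfalse
  have hin : ∀ v ≠ 0, ∃ w, (F.orientation T).Adj w v := by
    intro v hv
    by_cases hr : v ∈ F.rows
    · simpa only [orientation_adj_right_of_mem_rows hr] using hzero v hr hv
    · have hcell : F.Cell 0 v := ⟨F.zero_mem, hr, Fin.pos_of_ne_zero hv⟩
      exact ⟨0, (orientation_adj_right_of_notMem_rows hr).2 ⟨hcell, hone v hcell⟩⟩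
  have hset := TopplingSequence.toppledBefore_inter_neighborSet_eq
    (P := F.canonToppling (F.phiTC T)) (F.isOrientation_orientation T) hsource hin
    (fun _ => phiTC_eq_ncard_outNeighbors) hv
  exact (Set.ext_iff.1 hset w).symm.trans and_comm

end Ferrers

theorem row_zeros_col_ones_count_general {n : ℕ} (F : Ferrers n)
    (T : Fin (n + 1) → Fin (n + 1) → Bool) (hone : ∀ j, F.Cell 0 j → T 0 j = true)
    (hzero : ∀ i ∈ F.rows, i ≠ 0 → ∃ j, F.Cell i j ∧ T i j = false) :
    (∀ i ∈ F.rows, ∀ l, i ∈ F.canonTop (F.phiTC T) (2 * l) →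
      {k | F.Cell i k ∧ T i k = false}.ncard =
        {j | j ∉ F.rows ∧ i < j ∧ ∃ m, m < l ∧ j ∈ F.canonTop (F.phiTC T) (2 * m + 1)}.ncard) ∧
    (∀ i ∉ F.rows, ∀ l, i ∈ F.canonTop (F.phiTC T) (2 * l + 1) →
      {k | F.Cell k i ∧ T k i = true}.ncard =
        {j | j ∈ F.rows ∧ j < i ∧ ∃ m, m ≤ l ∧ j ∈ F.canonTop (F.phiTC T) (2 * m)}.ncard) := by
  refine ⟨fun i hi l hl => ?_, fun i hi l hl => ?_⟩
  · congr! 3 with j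
    rw [← Ferrers.orientation_adj_right_of_mem_rows hi,
      Ferrers.orientation_adj_iff_of_mem_canonTop hone hzero hl,
      Ferrers.adj_iff_of_mem_rows hi, and_assoc]
    exact and_congr_right fun hj =>
      and_congr_right' (Ferrers.mem_toppledBefore_canonToppling_of_notMem_rows hj)
  · congr! 3 with j
    rw [← Ferrers.orientation_adj_right_of_notMem_rows hi,
      Ferrers.orientation_adj_iff_of_mem_canonTop hone hzero hl,
      Ferrers.adj_iff_of_notMem_rows hi, and_assoc]
    exact and_congr_right fun hj =>
      and_congr_right' (Ferrers.mem_toppledBefore_canonToppling_of_mem_rows hj)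

/-- **Lemma, configuration-free form.**  (a) If the non-sink row
vertex `i` lies in `Uˡ`, the number of `0`s in row `i` of `T` is the number of
columns `j > i` lying in `V¹ ∪ ⋯ ∪ Vˡ`.  (b) If the column vertex `i` lies in
`V^{l+1}`, the number of `1`s in column `i` of `T` is the number of rows `j < i`
lying in `U⁰ ∪ ⋯ ∪ Uˡ`.  (Here `Uᵐ = canonTop (2m)` and `Vᵐ⁺¹ = canonTop (2m + 1)`.) -/
theorem row_zeros_col_ones_count {n : ℕ} (F : Ferrers n)
    (T : Fin (n + 1) → Fin (n + 1) → Bool) (hT : F.IsEW T) :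
    (∀ i : Fin (n + 1), i ∈ F.rows → i ≠ 0 → ∀ l : ℕ,
      i ∈ F.canonTop (F.phiTC T) (2 * l) →
        {k | F.Cell i k ∧ T i k = false}.ncard =
          {j : Fin (n + 1) | j ∉ F.rows ∧ i < j ∧
            ∃ m, m < l ∧ j ∈ F.canonTop (F.phiTC T) (2 * m + 1)}.ncard) ∧
    (∀ i : Fin (n + 1), i ∉ F.rows → ∀ l : ℕ,
      i ∈ F.canonTop (F.phiTC T) (2 * l + 1) →
        {k | F.Cell k i ∧ T k i = true}.ncard =
          {j : Fin (n + 1) | j ∈ F.rows ∧ j < i ∧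
            ∃ m, m ≤ l ∧ j ∈ F.canonTop (F.phiTC T) (2 * m)}.ncard) := by
  obtain ⟨hrow, hcol⟩ := row_zeros_col_ones_count_general F T hT.2.1 hT.2.2.1
  exact ⟨fun i hi _ => hrow i hi, hcol⟩
end

section
/- For every n ≥ 1, the number of canonical decorated n-permutations equals the number of intransitive trees on the vertex set {0, 1, …, n}. -/
/-!
Both sides count the pairs `(h, f)` in which `h` assigns a level to every vertex, with `h 0 = 0`,
and `f` assigns to every `v ≠ 0` a possible parent: a vertex on level `h v - 1` that is smaller
than `v` if `h v` is odd and larger than `v` if `h v` is even.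

* An intransitive tree rooted at `0` is determined by the distances to `0` together with the
  neighbour of each `v ≠ 0` that is closer to `0`. Intransitivity forces the levels to consist
  alternately of local minima and local maxima, starting with the local minimum `0`.
* A permutation is determined by the function that sends a letter to the index of its block, and
  the letters counted by `μ_i` are exactly the possible parents of `i`. The block indices are
  computed greedily along the word `0π`: the index is kept while the word continues in the
  direction of the current block and increases by one otherwise. Conversely, the word lists the
  levels of `h` in turn, in alternating directions; the existence of a possible parent of the first
  letter of a level is what makes the word turn there.
-/

open Classical

/-- `takeRun b l` splits `l` into its maximal increasing (if `b = true`) or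
decreasing (if `b = false`) prefix, together with the rest of the list. -/
noncomputable def takeRun {n : ℕ} :
    Bool → List (Fin (n + 1)) → List (Fin (n + 1)) × List (Fin (n + 1))
  | _, [] => ([], [])
  | _, [x] => ([x], [])
  | b, x :: y :: rest =>
    if (if b then x < y else y < x) then
      ((takeRun b (y :: rest)).1.cons x, (takeRun b (y :: rest)).2)
    else ([x], y :: rest)

/-- Repeatedly strip off maximal alternately increasing/decreasing runs
(`fuel` bounds the number of iterations; `fuel = l.length` always suffices). -/
noncomputable def runsFuel {n : ℕ} :
    ℕ → Bool → List (Fin (n + 1)) → List (List (Fin (n + 1)))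
  | 0, _, _ => []
  | _ + 1, _, [] => []
  | fuel + 1, b, x :: xs =>
    (takeRun b (x :: xs)).1 :: runsFuel fuel (!b) (takeRun b (x :: xs)).2

/-- The run decomposition of a permutation word `l`: the blocks of maximal
alternately increasing and decreasing runs (the first one increasing), prefixed
with the block `D⁰ = {0}`.  Blocks at odd index are the increasing `A`-blocks and
blocks at even index are the decreasing `D`-blocks. -/
noncomputable def runDec {n : ℕ} (l : List (Fin (n + 1))) : List (List (Fin (n + 1))) :=
  [(0 : Fin (n + 1))] :: runsFuel l.length true l

/-- `μ_i(π)`: if the letter `i` lies in the block `Aˡ` of the run decomposition,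
the number of letters `j < i` in the preceding block `D^{l-1}`; if `i` lies in
`Dˡ` (`l ≥ 1`), the number of letters `j > i` in the preceding block `Aˡ`. -/
noncomputable def muPerm {n : ℕ} (l : List (Fin (n + 1))) (i : Fin (n + 1)) : ℕ :=
  let blocks := runDec l
  let m := sInf {m | i ∈ blocks.getD m []}
  let prev := blocks.getD (m - 1) []
  if m % 2 = 1 then (prev.filter fun j => decide (j < i)).length
  else (prev.filter fun j => decide (i < j)).length

section Lists

variable {α β : Type*}

lemma exists_isChain_cons_of_nodup (g : α → α → β → β) (b : β) {a : α} {l : List α}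
    (hl : (a :: l).Nodup) :
    ∃ h : α → β, h a = b ∧ (a :: l).IsChain fun x y => h y = g x y (h x) := by
  induction l generalizing a b with
  | nil => exact ⟨fun _ => b, rfl, .singleton a⟩
  | cons c l ih =>
    obtain ⟨ha, hcl⟩ := List.nodup_cons.1 hl
    obtain ⟨h, hc, hh⟩ := ih (g a c b) hcl
    have hupd : ∀ v ∈ c :: l, Function.update h a b v = h v := fun v hv =>
      Function.update_of_ne (ne_of_mem_of_not_mem hv ha) _ _
    refine ⟨Function.update h a b, Function.update_self .., List.isChain_cons_cons.2 ⟨?_, ?_⟩⟩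
    · rw [hupd c List.mem_cons_self, Function.update_self, hc]
    · refine hh.imp_of_mem_imp fun x y hx hy hxy => ?_
      rwa [hupd x hx, hupd y hy]

lemma eq_of_isChain_cons {g : α → α → β → β} {h h' : α → β} {a : α} {l : List α}
    (ha : h a = h' a) (hh : (a :: l).IsChain fun x y => h y = g x y (h x))
    (hh' : (a :: l).IsChain fun x y => h' y = g x y (h' x)) : ∀ v ∈ a :: l, h v = h' v := by
  induction l generalizing a with
  | nil => simpa using ha
  | cons c l ih =>
    obtain ⟨hc, hl⟩ := List.isChain_cons_cons.1 hh
    obtain ⟨hc', hl'⟩ := List.isChain_cons_cons.1 hh'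
    exact List.forall_mem_cons.2 ⟨ha, ih (by rw [hc, hc', ha]) hl hl'⟩

lemma existsUnique_pairwise_and_mem_iff (r : α → α → Prop) [IsStrictTotalOrder α r]
    (s : Finset α) : ∃! l : List α, l.Pairwise r ∧ ∀ a, a ∈ l ↔ a ∈ s := by
  let := linearOrderOfSTO r
  refine ⟨s.sort, ⟨s.sortedLT_sort.pairwise, fun a => s.mem_sort (· ≤ ·)⟩, fun l hl => ?_⟩
  refine List.Perm.eq_of_pairwise' hl.1 s.sortedLT_sort.pairwise ?_
  refine (List.perm_ext_iff_of_nodup hl.1.nodup s.sortedLT_sort.pairwise.nodup).2 fun a => ?_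
  rw [hl.2, s.mem_sort]

lemma length_filter_eq_card {l : List α} (hl : l.Nodup) (hmem : ∀ a, a ∈ l) (p : α → Prop)
    [DecidablePred p] : (l.filter p).length = Nat.card {a // p a} := by
  rw [← List.toFinset_card_of_nodup (hl.filter _), ← Nat.card_eq_finsetCard]
  exact Nat.card_congr (Equiv.subtypeEquivRight fun a => by simp [hmem a])

end Lists

section LevelOrder

variable {α : Type*} [LinearOrder α] {h : α → ℕ} {k : ℕ} {x y : α}

/-- The order in which the letters of the `k`-th block of a run decomposition are listed:
increasing in the blocks `A` (`k` odd) and decreasing in the blocks `D` (`k` even). -/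
def AltLT (k : ℕ) : α → α → Prop :=
  if Odd k then (· < ·) else (· > ·)

lemma altLT_iff_of_odd (hk : Odd k) : AltLT k x y ↔ x < y := by
  simp [AltLT, hk]

lemma altLT_iff_of_not_odd (hk : ¬Odd k) : AltLT k x y ↔ y < x := by
  simp [AltLT, hk]

lemma altLT_succ : AltLT (k + 1) x y ↔ AltLT k y x := by
  by_cases hk : Odd k <;> simp [AltLT, hk, Nat.odd_add_one]

instance (k : ℕ) : IsStrictTotalOrder α (AltLT k) := by
  unfold AltLT
  split_ifs <;> infer_instance

/-- The order on letters that lists the levels of `h` one after the other, the letters of the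
`k`-th level being listed according to `AltLT k`. -/
def LevelLT (h : α → ℕ) (x y : α) : Prop :=
  h x < h y ∨ h x = h y ∧ AltLT (h x) x y

lemma LevelLT.level_le (hxy : LevelLT h x y) : h x ≤ h y :=
  hxy.elim le_of_lt fun hxy => hxy.1.le

lemma LevelLT.altLT (hxy : LevelLT h x y) (heq : h x = h y) : AltLT (h x) x y :=
  (hxy.resolve_left heq.not_lt).2

instance (h : α → ℕ) : IsStrictTotalOrder α (LevelLT h) where
  irrefl x hx := irrefl x (hx.altLT rfl)
  trans x y z hxy hyz := by
    rcases hxy.level_le.trans hyz.level_le |>.lt_or_eq with hlt | hxz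
    · exact .inl hlt
    · have hxy' : h x = h y := hxy.level_le.antisymm (hyz.level_le.trans_eq hxz.symm)
      have hb : AltLT (h x) y z := hxy' ▸ hyz.altLT (hxy'.symm.trans hxz)
      exact .inr ⟨hxz, _root_.trans (hxy.altLT hxy') hb⟩
  trichotomous x y hxy hyx := by
    have heq : h x = h y :=
      le_antisymm (not_lt.1 fun hlt => hyx (.inl hlt)) (not_lt.1 fun hlt => hxy (.inl hlt))
    exact Std.Trichotomous.trichotomous (r := AltLT (h x)) x y (fun hb => hxy (.inr ⟨heq, hb⟩))
      fun hb => hyx (.inr ⟨heq.symm, heq ▸ hb⟩)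

lemma level_head_le {a v : α} {l : List α} (hp : (a :: l).Pairwise (LevelLT h))
    (hv : v ∈ a :: l) : h a ≤ h v := by
  rcases List.mem_cons.1 hv with rfl | hv
  · rfl
  · exact (List.rel_of_pairwise_cons hp hv).level_le

/-- The possible parents of `v` in an intransitive tree rooted at its least vertex in which the
vertices have the distances `h` to the root. -/
def parents (h : α → ℕ) (v : α) : Set α :=
  {u | h u + 1 = h v ∧ AltLT (h v) u v}

/-- The functions assigning to the vertices of some intransitive tree their distances to `r`. -/
def IsLevelFunction (r : α) (h : α → ℕ) : Prop :=
  h r = 0 ∧ ∀ v ≠ r, (parents h v).Nonempty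

lemma IsLevelFunction.pos {r v : α} (hh : IsLevelFunction r h) (hv : v ≠ r) : 0 < h v := by
  obtain ⟨u, hu, -⟩ := hh.2 v hv
  omega

end LevelOrder

section RunLevel

variable {α : Type*} [LinearOrder α] {h : α → ℕ} {l : List α}

/-- The index of the block of `y` if `y` follows the letter `x` of the `k`-th block. -/
noncomputable def nextLevel (x y : α) (k : ℕ) : ℕ :=
  if AltLT k x y then k else k + 1

/-- The letters of `l` have the block indices `h`, up to a shift that respects the direction of the
first block. -/
def IsRunLevel (h : α → ℕ) (l : List α) : Prop :=
  l.IsChain fun x y => h y = nextLevel x y (h x)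

lemma levelLT_of_eq_nextLevel {x y : α} (hxy : h y = nextLevel x y (h x)) : LevelLT h x y := by
  unfold nextLevel at hxy
  split_ifs at hxy with hb
  · exact .inr ⟨hxy.symm, hb⟩
  · exact .inl (by omega)

lemma mem_parents_of_eq_nextLevel {x y : α} (hxy : h y = nextLevel x y (h x)) (hlt : h x < h y) :
    x ∈ parents h y := by
  unfold nextLevel at hxy
  split_ifs at hxy with hb
  · omega
  · have hne : x ≠ y := by
      rintro rfl
      exact hlt.false
    refine ⟨hxy.symm, ?_⟩
    rw [hxy, altLT_succ]
    by_contra hb'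
    exact hne (Std.Trichotomous.trichotomous (r := AltLT (h x)) x y hb hb')

lemma IsRunLevel.pairwise (hl : IsRunLevel h l) : l.Pairwise (LevelLT h) :=
  (hl.imp fun _ _ => levelLT_of_eq_nextLevel).pairwise

lemma IsRunLevel.exists_mem_parents (hl : IsRunLevel h l) :
    ∀ u ∈ l, ∀ v ∈ l, h u < h v → ∃ w ∈ l, w ∈ parents h v := by
  induction l with
  | nil => simp
  | cons a l ih =>
    intro u hu v hv huv
    have hav : h a < h v := (level_head_le hl.pairwise hu).trans_lt huv
    have hvl : v ∈ l := (List.mem_cons.1 hv).resolve_left (by rintro rfl; exact hav.false)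
    cases l with
    | nil => simp at hvl
    | cons b l =>
      obtain ⟨hab, hbl : IsRunLevel h (b :: l)⟩ := List.isChain_cons_cons.1 hl
      rcases (level_head_le hbl.pairwise hvl).lt_or_eq with hbv | hbv
      · obtain ⟨w, hw, hwv⟩ := ih hbl b List.mem_cons_self v hvl hbv
        exact ⟨w, List.mem_cons_of_mem _ hw, hwv⟩
      · obtain ⟨hlevel, hab⟩ := mem_parents_of_eq_nextLevel hab (hbv ▸ hav)
        refine ⟨a, List.mem_cons_self, hlevel.trans hbv, ?_⟩
        rw [← hbv]
        rcases List.mem_cons.1 hvl with rfl | hvl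
        · exact hab
        · exact _root_.trans hab ((List.rel_of_pairwise_cons hbl.pairwise hvl).altLT hbv)

lemma isRunLevel_of_pairwise (hp : l.Pairwise (LevelLT h))
    (hpar : ∀ u ∈ l, ∀ v ∈ l, h u < h v → ∃ w ∈ l, w ∈ parents h v) : IsRunLevel h l := by
  refine List.isChain_iff_forall_rel_of_append_cons_cons.2 fun x y l₁ l₂ hl => ?_
  have hx : x ∈ l := by simp [hl]
  have hy : y ∈ l := by simp [hl]
  rw [hl, List.pairwise_append] at hp
  obtain ⟨-, hp, hl₁⟩ := hp
  have hxy : LevelLT h x y := List.rel_of_pairwise_cons hp List.mem_cons_self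
  unfold nextLevel
  rcases hxy.level_le.lt_or_eq with hlt | heq
  · obtain ⟨w, hw, hwy, hb⟩ := hpar x hx y hy hlt
    have hwx : w = x ∨ LevelLT h w x := by
      rw [hl, List.mem_append, List.mem_cons] at hw
      rcases hw with hw | rfl | hw
      · exact .inr (hl₁ w hw x List.mem_cons_self)
      · exact .inl rfl
      · have := level_head_le hp.of_cons hw
        omega
    have hwx_level : h w = h x := by
      rcases hwx with rfl | hwx
      · rfl
      · have := hwx.level_le
        omega
    rw [← hwy, altLT_succ, hwx_level] at hb
    have hyx : AltLT (h x) y x := by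
      rcases hwx with rfl | hwx
      · exact hb
      · exact _root_.trans hb (hwx_level ▸ hwx.altLT hwx_level)
    rw [if_neg (asymm hyx), ← hwy, hwx_level]
  · rw [if_pos (hxy.altLT heq), heq]

lemma isRunLevel_iff : IsRunLevel h l ↔ l.Pairwise (LevelLT h) ∧
    ∀ u ∈ l, ∀ v ∈ l, h u < h v → ∃ w ∈ l, w ∈ parents h v :=
  ⟨fun hl => ⟨hl.pairwise, hl.exists_mem_parents⟩, fun hl => isRunLevel_of_pairwise hl.1 hl.2⟩

end RunLevel

section PermWord

variable {α : Type*} {r : α} {l : List α}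

/-- The words in which every letter other than `r` occurs exactly once, and `r` does not occur. -/
def IsPermWord (r : α) (l : List α) : Prop :=
  l.Nodup ∧ ∀ v, v ∈ l ↔ v ≠ r

lemma IsPermWord.nodup_cons (hl : IsPermWord r l) : (r :: l).Nodup :=
  List.nodup_cons.2 ⟨fun hr => (hl.2 r).1 hr rfl, hl.1⟩

lemma IsPermWord.mem_cons (hl : IsPermWord r l) (v : α) : v ∈ r :: l := by
  rw [List.mem_cons, hl.2]
  exact eq_or_ne v r

variable [LinearOrder α] {h : α → ℕ}

lemma IsPermWord.isRunLevel_cons_iff (hr : IsBot r) (hl : IsPermWord r l) :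
    h r = 0 ∧ IsRunLevel h (r :: l) ↔ IsLevelFunction r h ∧ l.Pairwise (LevelLT h) := by
  rw [isRunLevel_iff]
  constructor
  · rintro ⟨h0, hp, hpar⟩
    refine ⟨⟨h0, fun v hv => ?_⟩, hp.of_cons⟩
    have hlt : h r < h v := by
      have hrv := List.rel_of_pairwise_cons hp ((hl.2 v).2 hv)
      refine hrv.level_le.lt_of_ne fun heq => (hr v).not_gt ?_
      have hb := hrv.altLT heq
      rwa [h0, altLT_iff_of_not_odd (by decide)] at hb
    obtain ⟨w, -, hw⟩ := hpar r (hl.mem_cons r) v (hl.mem_cons v) hlt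
    exact ⟨w, hw⟩
  · rintro ⟨hh, hp⟩
    refine ⟨hh.1, List.pairwise_cons.2 ⟨fun v hv => .inl ?_, hp⟩, fun u _ v _ huv => ?_⟩
    · rw [hh.1]
      exact hh.pos ((hl.2 v).1 hv)
    · have hv : v ≠ r := by
        rintro rfl
        have := hh.1
        omega
      obtain ⟨w, hw⟩ := hh.2 v hv
      exact ⟨w, hl.mem_cons w, hw⟩

lemma IsPermWord.existsUnique_isLevelFunction (hr : IsBot r) (hl : IsPermWord r l) :
    ∃! h : α → ℕ, IsLevelFunction r h ∧ l.Pairwise (LevelLT h) := by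
  simp only [← hl.isRunLevel_cons_iff hr]
  obtain ⟨h, hh⟩ := exists_isChain_cons_of_nodup nextLevel 0 hl.nodup_cons
  exact ⟨h, hh, fun h' hh' => funext fun v =>
    eq_of_isChain_cons (hh'.1.trans hh.1.symm) hh'.2 hh.2 v (hl.mem_cons v)⟩

lemma existsUnique_isPermWord_pairwise [Finite α] (r : α) (h : α → ℕ) :
    ∃! l, IsPermWord r l ∧ l.Pairwise (LevelLT h) := by
  have := Fintype.ofFinite α
  obtain ⟨l, ⟨hp, hmem⟩, hunique⟩ :=
    existsUnique_pairwise_and_mem_iff (LevelLT h) (Finset.univ.erase r)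
  refine ⟨l, ⟨⟨hp.nodup, by simpa using hmem⟩, hp⟩, fun l' hl' => hunique l' ⟨hl'.2, ?_⟩⟩
  simpa using hl'.1.2

lemma exists_permWord_equiv_levelFunction [Finite α] (hr : IsBot r) :
    ∃ e : {l : List α // IsPermWord r l} ≃ {h : α → ℕ // IsLevelFunction r h},
      ∀ l, IsRunLevel (e l).1 (r :: l.1) := by
  choose level hlevel hunique using fun l : {l : List α // IsPermWord r l} =>
    l.2.existsUnique_isLevelFunction hr
  refine ⟨Equiv.ofBijective (fun l => ⟨level l, (hlevel l).1⟩) ⟨fun l l' hll' => ?_, ?_⟩,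
    fun l => ((l.2.isRunLevel_cons_iff hr).2 (hlevel l)).2⟩
  · have hlevel_eq : level l = level l' := congrArg Subtype.val hll'
    exact Subtype.ext <| (existsUnique_isPermWord_pairwise r (level l)).unique
      ⟨l.2, (hlevel l).2⟩ ⟨l'.2, hlevel_eq ▸ (hlevel l').2⟩
  · rintro ⟨h, hh⟩
    obtain ⟨l, ⟨hl, hp⟩, -⟩ := existsUnique_isPermWord_pairwise r h
    exact ⟨⟨l, hl⟩, Subtype.ext (hunique ⟨l, hl⟩ h ⟨hh, hp⟩).symm⟩

end PermWord

section RunDec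

variable {n : ℕ} {h : Fin (n + 1) → ℕ} {l : List (Fin (n + 1))}

lemma takeRun_cons_cons (k : ℕ) (x y : Fin (n + 1)) (l : List (Fin (n + 1))) :
    takeRun (decide (Odd k)) (x :: y :: l) =
      if AltLT k x y then
        (x :: (takeRun (decide (Odd k)) (y :: l)).1, (takeRun (decide (Odd k)) (y :: l)).2)
      else ([x], y :: l) := by
  by_cases hk : Odd k <;> simp [takeRun, AltLT, hk]

lemma getD_runsFuel {a : Fin (n + 1)} (hl : IsRunLevel h (a :: l)) {fuel : ℕ}
    (hfuel : (a :: l).length ≤ fuel) (m : ℕ) :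
    (runsFuel fuel (decide (Odd (h a))) (a :: l)).getD m [] =
      (a :: l).filter fun v => h v = h a + m := by
  induction l generalizing a fuel m with
  | nil =>
    obtain ⟨fuel, rfl⟩ := Nat.exists_eq_add_of_le' hfuel
    cases m <;> cases fuel <;> simp [runsFuel, takeRun]
  | cons b l ih =>
    obtain ⟨fuel, rfl⟩ := Nat.exists_eq_add_of_le' hfuel
    obtain ⟨hab, hbl : IsRunLevel h (b :: l)⟩ := List.isChain_cons_cons.1 hl
    rw [List.length_cons, ← add_assoc, runsFuel, takeRun_cons_cons]
    unfold nextLevel at hab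
    split_ifs at hab ⊢ with hb
    · have ih := ih hbl (fuel := fuel + (b :: l).length + 1) (by omega)
      simp only [runsFuel, hab] at ih
      cases m with
      | zero => simpa using ih 0
      | succ m => simpa using ih (m + 1)
    · have ih := ih hbl (fuel := fuel + (b :: l).length) (by omega)
      have hparity : decide (Odd (h b)) = !decide (Odd (h a)) := by
        rw [hab, ← decide_not]
        exact decide_eq_decide.2 Nat.odd_add_one
      rw [hparity] at ih
      cases m with
      | zero =>
        have hgt : ∀ v ∈ b :: l, h v ≠ h a := fun v hv => by
          have := level_head_le hbl.pairwise hv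
          omega
        simpa [List.filter_eq_nil_iff] using hgt
      | succ m =>
        rw [List.getD_cons_succ, ih, hab, List.filter_cons_of_neg (a := a) (by simp), add_assoc,
          add_comm 1]

lemma runDec_eq_runsFuel_cons_zero (l : List (Fin (n + 1))) :
    runDec l = runsFuel (0 :: l).length false (0 :: l) := by
  cases l <;> simp [runDec, runsFuel, takeRun]

lemma getD_runDec (h0 : h 0 = 0) (hl : IsRunLevel h (0 :: l)) (m : ℕ) :
    (runDec l).getD m [] = (0 :: l).filter fun v => h v = m := by
  simpa [h0, runDec_eq_runsFuel_cons_zero] using getD_runsFuel hl le_rfl m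

lemma muPerm_eq_length_filter_altLT {v : Fin (n + 1)} {m : ℕ}
    (hm : sInf {k | v ∈ (runDec l).getD k []} = m) :
    muPerm l v = (((runDec l).getD (m - 1) []).filter fun u => AltLT m u v).length := by
  simp only [muPerm, hm, ← Nat.odd_iff]
  split_ifs with hodd
  · simp only [altLT_iff_of_odd hodd]
  · simp only [altLT_iff_of_not_odd hodd]

lemma muPerm_eq_card_parents (h0 : h 0 = 0) (hl : IsPermWord 0 l) (hrun : IsRunLevel h (0 :: l))
    {v : Fin (n + 1)} (hv : 0 < h v) : muPerm l v = Nat.card (parents h v) := by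
  have hblock : {k | v ∈ (runDec l).getD k []} = {h v} := by
    ext k
    simp only [Set.mem_ofPred_eq, getD_runDec h0 hrun, List.mem_filter, hl.mem_cons v, true_and,
      decide_eq_true_eq, Set.mem_singleton_iff]
    exact eq_comm
  rw [muPerm_eq_length_filter_altLT (by rw [hblock, csInf_singleton]), getD_runDec h0 hrun,
    List.filter_filter]
  simp only [← Bool.decide_and]
  rw [length_filter_eq_card hl.nodup_cons hl.mem_cons]
  refine Nat.card_congr (Equiv.subtypeEquivRight fun u => ?_)
  rw [and_comm, parents, Set.mem_ofPred_eq]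
  exact and_congr_left' (by omega)

end RunDec

section ParentGraph

variable {V : Type*} {r : V}

/-- The graph joining every vertex `v` other than the root `r` to its parent `f v`. -/
def parentGraph (f : {v // v ≠ r} → V) : SimpleGraph V :=
  .fromEdgeSet (Set.range fun v => s(v.1, f v))

/-- `f` sends every vertex other than the root `r` to a vertex on the preceding level of `h`, the
root being on level `0`. -/
def IsParentMap (h : V → ℕ) (f : {v // v ≠ r} → V) : Prop :=
  h r = 0 ∧ ∀ v, h (f v) + 1 = h v

variable {h : V → ℕ} {f : {v // v ≠ r} → V}

lemma card_edgeSet_parentGraph_le [Finite V] (f : {v // v ≠ r} → V) :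
    Nat.card (parentGraph f).edgeSet ≤ Nat.card {v // v ≠ r} := by
  rw [parentGraph, SimpleGraph.edgeSet_fromEdgeSet]
  exact (Nat.card_mono (Set.toFinite _) Set.sdiff_subset).trans (Finite.card_range_le _)

lemma parentGraph_adj_iff (hf : IsParentMap h f) {a b : V} :
    (parentGraph f).Adj a b ↔ (∃ ha, f ⟨a, ha⟩ = b) ∨ ∃ hb, f ⟨b, hb⟩ = a := by
  have hne : ∀ v, f v ≠ v := fun v hv => by
    have := hf.2 v
    rw [hv] at this
    omega
  simp only [parentGraph, SimpleGraph.fromEdgeSet_adj, Set.mem_range, Sym2.eq_iff]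
  constructor
  · rintro ⟨⟨v, ⟨rfl, rfl⟩ | ⟨rfl, rfl⟩⟩, -⟩
    · exact .inl ⟨v.2, rfl⟩
    · exact .inr ⟨v.2, rfl⟩
  · rintro (⟨ha, rfl⟩ | ⟨hb, rfl⟩)
    · exact ⟨⟨⟨a, ha⟩, .inl ⟨rfl, rfl⟩⟩, (hne ⟨a, ha⟩).symm⟩
    · exact ⟨⟨⟨b, hb⟩, .inr ⟨rfl, rfl⟩⟩, hne ⟨b, hb⟩⟩

lemma parentGraph_adj_parent (hf : IsParentMap h f) (v : {v // v ≠ r}) :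
    (parentGraph f).Adj v (f v) :=
  (parentGraph_adj_iff hf).2 (.inl ⟨v.2, rfl⟩)

lemma level_eq_add_one_of_parentGraph_adj (hf : IsParentMap h f) {a b : V}
    (hab : (parentGraph f).Adj a b) : h a = h b + 1 ∨ h b = h a + 1 := by
  rcases (parentGraph_adj_iff hf).1 hab with ⟨ha, rfl⟩ | ⟨hb, rfl⟩
  · exact .inl (hf.2 ⟨a, ha⟩).symm
  · exact .inr (hf.2 ⟨b, hb⟩).symm

lemma exists_walk_length_eq_level (hf : IsParentMap h f) (v : V) :
    ∃ p : (parentGraph f).Walk r v, p.length = h v := by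
  induction hk : h v generalizing v with
  | zero =>
    obtain rfl : v = r := by
      by_contra hv
      exact absurd ((hf.2 ⟨v, hv⟩).trans hk) (Nat.succ_ne_zero _)
    exact ⟨.nil, rfl⟩
  | succ k ih =>
    have hv : v ≠ r := by
      rintro rfl
      exact absurd (hk.symm.trans hf.1) (Nat.succ_ne_zero _)
    obtain ⟨p, hp⟩ := ih (f ⟨v, hv⟩) (Nat.succ_injective ((hf.2 ⟨v, hv⟩).trans hk))
    exact ⟨p.concat (parentGraph_adj_parent hf ⟨v, hv⟩).symm, by simp [hp]⟩

lemma level_le_add_length (hf : IsParentMap h f) {a b : V} (p : (parentGraph f).Walk a b) :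
    h b ≤ h a + p.length := by
  induction p with
  | nil => simp
  | cons hab p ih =>
    rw [SimpleGraph.Walk.length_cons]
    rcases level_eq_add_one_of_parentGraph_adj hf hab with hlevel | hlevel <;> omega

lemma parentGraph_connected (hf : IsParentMap h f) : (parentGraph f).Connected :=
  (SimpleGraph.connected_iff_exists_forall_reachable _).2
    ⟨r, fun v => (exists_walk_length_eq_level hf v).choose.reachable⟩

lemma parentGraph_dist (hf : IsParentMap h f) (v : V) : (parentGraph f).dist r v = h v := by
  obtain ⟨p, hp⟩ := exists_walk_length_eq_level hf v
  obtain ⟨q, hq⟩ := (parentGraph_connected hf).exists_walk_length_eq_dist r v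
  refine (hp ▸ SimpleGraph.dist_le p).antisymm ?_
  simpa [hf.1, hq] using level_le_add_length hf q

lemma parentGraph_isTree [Finite V] (hf : IsParentMap h f) : (parentGraph f).IsTree := by
  have hconn := parentGraph_connected hf
  refine SimpleGraph.isTree_iff_connected_and_card.2 ⟨hconn, ?_⟩
  have hroot : Nat.card {v // v ≠ r} + 1 = Nat.card V := by
    rw [← Finite.card_option, Nat.card_congr (Equiv.optionSubtypeNe r)]
  have hge := hconn.card_vert_le_card_edgeSet_add_one
  have hle := card_edgeSet_parentGraph_le f
  omega

lemma parentGraph_injective {h' : V → ℕ} {f' : {v // v ≠ r} → V} (hf : IsParentMap h f)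
    (hf' : IsParentMap h' f') (heq : parentGraph f = parentGraph f') : h = h' ∧ f = f' := by
  have hlevel : h = h' := by
    funext v
    rw [← parentGraph_dist hf, heq, parentGraph_dist hf']
  subst hlevel
  refine ⟨rfl, funext fun v => ?_⟩
  have hadj := parentGraph_adj_parent hf v
  rw [heq, parentGraph_adj_iff hf'] at hadj
  rcases hadj with ⟨_, hfv⟩ | ⟨hv, hfv⟩
  · exact hfv.symm
  · have hup : _ = h (f v) := hf'.2 ⟨f v, hv⟩
    have hdown := hf.2 v
    rw [hfv] at hup
    omega

lemma exists_adj_dist_add_one_eq {G : SimpleGraph V} (hG : G.Connected) {u v : V} (huv : u ≠ v) :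
    ∃ w, G.Adj v w ∧ G.dist u w + 1 = G.dist u v := by
  obtain ⟨p, hp⟩ := hG.exists_walk_length_eq_dist v u
  cases p with
  | nil => exact absurd rfl huv
  | @cons _ w _ hvw p =>
    have hpw := SimpleGraph.dist_le p
    have htri := hG.dist_triangle (u := v) (v := w) (w := u)
    rw [SimpleGraph.dist_eq_one_iff_adj.2 hvw] at htri
    rw [SimpleGraph.Walk.length_cons] at hp
    refine ⟨w, hvw, ?_⟩
    rw [G.dist_comm (u := u) (v := w), G.dist_comm (u := u) (v := v)]
    omega

lemma exists_parentGraph_eq {G : SimpleGraph V} (hG : G.IsTree) (r : V) :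
    ∃ f : {v // v ≠ r} → V, IsParentMap (G.dist r) f ∧ parentGraph f = G := by
  choose f hadj hdist using fun v : {v // v ≠ r} =>
    exists_adj_dist_add_one_eq hG.connected v.2.symm
  have hf : IsParentMap (G.dist r) f := ⟨SimpleGraph.dist_self, hdist⟩
  have hle : parentGraph f ≤ G := fun a b hab => by
    rcases (parentGraph_adj_iff hf).1 hab with ⟨ha, rfl⟩ | ⟨hb, rfl⟩
    · exact hadj ⟨a, ha⟩
    · exact (hadj ⟨b, hb⟩).symm
  exact ⟨f, hf,
    hle.antisymm ((SimpleGraph.isTree_iff_minimal_connected.1 hG).2 (parentGraph_connected hf) hle)⟩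

end ParentGraph

section Intransitive

variable {V : Type*} [LinearOrder V] {r : V}

/-- Every vertex is smaller than all its neighbours or greater than all of them. -/
def IsIntransitive (G : SimpleGraph V) : Prop :=
  ∀ v, (∀ w, G.Adj v w → v < w) ∨ (∀ w, G.Adj v w → w < v)

lemma IsIntransitive.altLT_of_adj {G : SimpleGraph V} (hi : IsIntransitive G) {u v w : V} {k : ℕ}
    (hu : G.Adj v u) (hw : G.Adj v w) (huv : AltLT k u v) : AltLT k w v := by
  by_cases hk : Odd k
  · rw [altLT_iff_of_odd hk] at huv ⊢
    exact (hi v).elim (fun hv => absurd huv (hv u hu).asymm) fun hv => hv w hw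
  · rw [altLT_iff_of_not_odd hk] at huv ⊢
    exact (hi v).elim (fun hv => hv w hw) fun hv => absurd huv (hv u hu).asymm

lemma IsIntransitive.altLT_dist (hr : IsBot r) {G : SimpleGraph V} (hi : IsIntransitive G)
    (hG : G.Connected) {v w : V} (hvw : G.Adj v w) : AltLT (G.dist r v) w v := by
  induction hk : G.dist r v generalizing v w with
  | zero =>
    obtain rfl : r = v := hG.dist_eq_zero_iff.1 hk
    exact (altLT_iff_of_not_odd (by decide)).2 ((hr w).lt_of_ne hvw.ne)
  | succ k ih =>
    have hrv : r ≠ v := by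
      rintro rfl
      simp at hk
    obtain ⟨u, hvu, hu⟩ := exists_adj_dist_add_one_eq hG hrv
    exact hi.altLT_of_adj hvu hvw (altLT_succ.2 (ih hvu.symm (by omega)))

lemma isIntransitive_parentGraph_iff (hr : IsBot r) {h : V → ℕ} {f : {v // v ≠ r} → V}
    (hf : IsParentMap h f) : IsIntransitive (parentGraph f) ↔
      ∀ v : {v // v ≠ r}, AltLT (h v) (f v) v.1 := by
  constructor
  · intro hi v
    rw [← parentGraph_dist hf]
    exact hi.altLT_dist hr (parentGraph_connected hf) (parentGraph_adj_parent hf v)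
  · intro halt v
    have hadj : ∀ w, (parentGraph f).Adj v w → AltLT (h v) w v := fun w hvw => by
      rcases (parentGraph_adj_iff hf).1 hvw with ⟨hv, rfl⟩ | ⟨hw, rfl⟩
      · exact halt ⟨v, hv⟩
      · have hb := halt ⟨w, hw⟩
        rwa [← hf.2 ⟨w, hw⟩, altLT_succ] at hb
    by_cases hodd : Odd (h v)
    · exact .inr fun w hvw => (altLT_iff_of_odd hodd).1 (hadj w hvw)
    · exact .inl fun w hvw => (altLT_iff_of_not_odd hodd).1 (hadj w hvw)

lemma nonempty_sigma_parents_equiv_intransitiveTree [Finite V] (hr : IsBot r) :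
    Nonempty ((Σ h : {h : V → ℕ // IsLevelFunction r h}, ∀ v : {v // v ≠ r}, parents h.1 v.1) ≃
      {G : SimpleGraph V // G.IsTree ∧ IsIntransitive G}) := by
  have hf : ∀ p : Σ h : {h : V → ℕ // IsLevelFunction r h}, ∀ v : {v // v ≠ r}, parents h.1 v.1,
      IsParentMap p.1.1 fun v => (p.2 v).1 := fun p => ⟨p.1.2.1, fun v => (p.2 v).2.1⟩
  refine ⟨Equiv.ofBijective (fun p => ⟨parentGraph fun v => (p.2 v).1, parentGraph_isTree (hf p),
    (isIntransitive_parentGraph_iff hr (hf p)).2 fun v => (p.2 v).2.2⟩) ⟨?_, ?_⟩⟩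
  · rintro ⟨⟨h, hh⟩, f⟩ ⟨⟨h', hh'⟩, f'⟩ heq
    obtain ⟨hlevel : h = h', hparent⟩ :=
      parentGraph_injective (hf _) (hf _) (congrArg Subtype.val heq)
    subst hlevel
    obtain rfl : f = f' := funext fun v => Subtype.ext (congrFun hparent v)
    rfl
  · rintro ⟨G, hG, hi⟩
    obtain ⟨f, hf, rfl⟩ := exists_parentGraph_eq hG r
    have hmem : ∀ v, f v ∈ parents ((parentGraph f).dist r) v.1 := fun v =>
      ⟨hf.2 v, (isIntransitive_parentGraph_iff hr hf).1 hi v⟩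
    exact ⟨⟨⟨_, hf.1, fun v hv => ⟨f ⟨v, hv⟩, hmem ⟨v, hv⟩⟩⟩, fun v => ⟨f v, hmem v⟩⟩, rfl⟩

end Intransitive

/-- A canonical decorated permutation as a word together with a dependent family of decorations
`a_v < μ_v`. The left-hand side encodes decorations as functions on all letters that vanish at the
absent letter `0`. -/
def decoratedPermEquiv (n : ℕ) :
    {p : List (Fin (n + 1)) × (Fin (n + 1) → ℕ) |
        p.1.Nodup ∧ (∀ v, v ∈ p.1 ↔ v ≠ 0) ∧ p.2 0 = 0 ∧
          ∀ i : Fin (n + 1), i ≠ 0 → p.2 i < muPerm p.1 i} ≃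
      Σ l : {l : List (Fin (n + 1)) // IsPermWord 0 l},
        ∀ v : {v : Fin (n + 1) // v ≠ 0}, Fin (muPerm l.1 v.1) where
  toFun p := ⟨⟨p.1.1, p.2.1, p.2.2.1⟩, fun v => ⟨p.1.2 v.1, p.2.2.2.2 v.1 v.2⟩⟩
  invFun q := ⟨(q.1.1, fun v => if hv : v ≠ 0 then (q.2 ⟨v, hv⟩).1 else 0),
    q.1.2.1, q.1.2.2, by simp, fun v hv => by simp [hv]⟩
  left_inv p := by
    refine Subtype.ext (Prod.ext rfl (funext fun v => ?_))
    by_cases hv : v = 0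
    · subst hv
      simpa using p.2.2.2.1.symm
    · simp [hv]
  right_inv q := by
    refine Sigma.ext rfl (heq_of_eq (funext fun v => Fin.ext ?_))
    simp [v.2]

/-- For every `n ≥ 1`, the number of canonical decorated
`n`-permutations (pairs `(π, a)` with `π` a permutation of `{1, …, n}` and
`0 ≤ a_i < μ_i(π)` for every letter `i`) equals the number of intransitive trees
on the vertex set `{0, 1, …, n}` (trees in which every vertex's label is either
smaller than all its neighbours' labels or greater than all of them). -/
theorem card_canonical_decorated_perms_eq_card_intransitive_trees
    (n : ℕ) (hn : 1 ≤ n) :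
    Nat.card {p : List (Fin (n + 1)) × (Fin (n + 1) → ℕ) |
        p.1.Nodup ∧ (∀ v, v ∈ p.1 ↔ v ≠ 0) ∧ p.2 0 = 0 ∧
          ∀ i : Fin (n + 1), i ≠ 0 → p.2 i < muPerm p.1 i} =
      Nat.card {G : SimpleGraph (Fin (n + 1)) | G.IsTree ∧
        ∀ v, (∀ w, G.Adj v w → v < w) ∨ (∀ w, G.Adj v w → w < v)} := by
  have hbot : IsBot (0 : Fin (n + 1)) := Fin.zero_le
  obtain ⟨e, he⟩ := exists_permWord_equiv_levelFunction hbot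
  obtain ⟨e'⟩ := nonempty_sigma_parents_equiv_intransitiveTree hbot
  refine Nat.card_congr ((decoratedPermEquiv n).trans (Equiv.trans ?_ e'))
  refine Equiv.sigmaCongr e fun l => Equiv.piCongrRight fun v => ?_
  have hcard : muPerm l.1 v.1 = Nat.card (parents (e l).1 v.1) :=
    muPerm_eq_card_parents (e l).2.1 l.2 (he l) ((e l).2.pos v.2)
  exact (finCongr hcard).trans (Finite.equivFin _).symm
end
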